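/- Suppose 𝒮 is finite. For every n≥1 and every R̂>0 there exists a matrix T_n on (ℂ^𝒳)^{⊗n}⊗H_B^{⊗n} with 0⪯T_n⪯I such that, for every probability distribution P on 𝒳 and every t∈(0,1): (i) for all s^n∈𝒮^n, Tr[(I−T_n)ρ^{XB}_{P,s^n}] ≤ (n+1)^{|𝒮|−1 + t|𝒳|(d_B−1)d_B/2 + (d_B−1)|𝒳|t} · 2^{n·t·(R̂ − min_Q I_{1−t}[X;B]_{P,Q})}, the minimum over all probability distributions Q on 𝒮; and (ii) for every density matrix σ on H_B^{⊗n}, Tr[T_n(ρ_P^{⊗n}⊗σ)] ≤ n^{d_B(d_B−1)/2}·Λ(n,d_B)·2^{−n·R̂}. -/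

import Mathlib

open scoped ComplexOrder

noncomputable section

/-- A density matrix: positive semidefinite with unit trace. -/
def IsDensity {m : Type*} [Fintype m] (ρ : Matrix m m ℂ) : Prop :=
  ρ.PosSemidef ∧ ρ.trace = 1

/-- Functional calculus for Hermitian matrices (junk value `0` on non-Hermitian input). -/
def matFun {m : Type*} [Fintype m] [DecidableEq m] (f : ℝ → ℝ) (A : Matrix m m ℂ) :
    Matrix m m ℂ :=
  if hA : A.IsHermitian then
    (hA.eigenvectorUnitary : Matrix m m ℂ) *
        Matrix.diagonal (fun i => (f (hA.eigenvalues i) : ℂ)) *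
      star (hA.eigenvectorUnitary : Matrix m m ℂ)
  else 0

/-- Matrix power, taken on the support (`0^p := 0` on the kernel). -/
def mpow {m : Type*} [Fintype m] [DecidableEq m] (A : Matrix m m ℂ) (p : ℝ) :
    Matrix m m ℂ :=
  matFun (fun u => if u ≤ 0 then 0 else u ^ p) A

/-- The classical–quantum state `Σ_x w(x) |x⟩⟨x| ⊗ ρ_x`. -/
def cqState {X B : Type*} [DecidableEq X] (w : X → ℝ) (ρ : X → Matrix B B ℂ) :
    Matrix (X × B) (X × B) ℂ :=
  Matrix.of fun p q => (if p.1 = q.1 then ((w p.1 : ℝ) : ℂ) else 0) * ρ p.1 p.2 q.2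

/-- Tensor product of a finite family of matrices, realized on functions. -/
def tensorFam {k d : Type*} [Fintype k] (ρ : k → Matrix d d ℂ) :
    Matrix (k → d) (k → d) ℂ :=
  Matrix.of fun i j => ∏ a, ρ a (i a) (j a)

/-- `Λ(n,d)`: the number of partitions of `n` into at most `d` parts. -/
def numPartLe (n d : ℕ) : ℕ := Nat.card {p : Nat.Partition n // p.parts.card ≤ d}

/-- The Rényi-type quantity `I_{1−t}[X;B]_{P,Q}`, given the mixed states `ρQ x`. -/
def renyiI {𝒳 : Type*} [Fintype 𝒳] {d : ℕ} (P : 𝒳 → ℝ)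
    (ρQ : 𝒳 → Matrix (Fin d) (Fin d) ℂ) (t : ℝ) : ℝ :=
  -((1 - t) / t) * Real.logb 2
    (Matrix.trace (mpow (∑ x, P x • mpow (ρQ x) (1 - t)) (1 / (1 - t)))).re

/-- Probability distributions on a finite set `𝒮`. -/
abbrev ProbVec (𝒮 : Type*) [Fintype 𝒮] : Type _ :=
  {Q : 𝒮 → ℝ // (∀ s, 0 ≤ Q s) ∧ ∑ s, Q s = 1}

section Part1
set_option linter.unusedSectionVars false

/-- A resolution of the identity by mutually orthogonal Hermitian projections. -/
structure PDec {m ι : Type*} [Fintype m] [DecidableEq m] [Fintype ι]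
    (f : ι → Matrix m m ℂ) : Prop where
  herm : ∀ j, (f j).IsHermitian
  idem : ∀ j, f j * f j = f j
  orth : ∀ j k, j ≠ k → f j * f k = 0
  sum : ∑ j, f j = 1

variable {m : Type*} [Fintype m] [DecidableEq m]

theorem PDec.sum_mul {ι : Type*} [Fintype ι] {f : ι → Matrix m m ℂ} (hf : PDec f)
    (p : ι → ℂ) (k : ι) : (∑ j, p j • f j) * f k = p k • f k := by
  classical
  rw [Finset.sum_mul, Finset.sum_eq_single k]
  · rw [Matrix.smul_mul, hf.idem]
  · intro b _ hb
    rw [Matrix.smul_mul, hf.orth b k hb, smul_zero]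
  · simp

theorem PDec.mul_sum {ι : Type*} [Fintype ι] {f : ι → Matrix m m ℂ} (hf : PDec f)
    (p : ι → ℂ) (k : ι) : f k * (∑ j, p j • f j) = p k • f k := by
  classical
  rw [Finset.mul_sum, Finset.sum_eq_single k]
  · rw [Matrix.mul_smul, hf.idem]
  · intro b _ hb
    rw [Matrix.mul_smul, hf.orth k b hb.symm, smul_zero]
  · simp

theorem PDec.ext_right {ι : Type*} [Fintype ι] {f : ι → Matrix m m ℂ} (hf : PDec f)
    {A B : Matrix m m ℂ} (h : ∀ k, A * f k = B * f k) : A = B := by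
  rw [← mul_one A, ← mul_one B, ← hf.sum, Finset.mul_sum, Finset.mul_sum]
  exact Finset.sum_congr rfl fun k _ => h k

theorem PDec.aeval {ι : Type*} [Fintype ι] {f : ι → Matrix m m ℂ} (hf : PDec f)
    (p : ι → ℂ) (P : Polynomial ℂ) :
    Polynomial.aeval (∑ j, p j • f j) P = ∑ j, (P.eval (p j)) • f j := by
  apply hf.ext_right
  intro k
  rw [hf.sum_mul]
  induction P using Polynomial.induction_on' with
  | add P Q hP hQ => simp [add_mul, hP, hQ, add_smul]
  | monomial i a =>
    simp only [Polynomial.aeval_monomial, Polynomial.eval_monomial]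
    have : ∀ i : ℕ, (∑ j, p j • f j) ^ i * f k = (p k ^ i) • f k := by
      intro i
      induction i with
      | zero => simp
      | succ i ih =>
        rw [pow_succ, mul_assoc, hf.sum_mul, Matrix.mul_smul, ih, smul_smul, pow_succ, mul_comm]
    rw [mul_assoc, this, Algebra.algebraMap_eq_smul_one, Matrix.smul_mul, one_mul, smul_smul]

theorem PDec.isHermitian {ι : Type*} [Fintype ι] {f : ι → Matrix m m ℂ} (hf : PDec f)
    (p : ι → ℝ) : (∑ j, (p j : ℂ) • f j).IsHermitian := by
  unfold Matrix.IsHermitian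
  rw [Matrix.conjTranspose_sum]
  refine Finset.sum_congr rfl fun j _ => ?_
  rw [Matrix.conjTranspose_smul, (hf.herm j).eq]
  simp

/-- Rank one eigenprojections. -/
def specProj {A : Matrix m m ℂ} (hA : A.IsHermitian) (i : m) : Matrix m m ℂ :=
  (hA.eigenvectorUnitary : Matrix m m ℂ) * Matrix.diagonal (Pi.single i 1) *
    star (hA.eigenvectorUnitary : Matrix m m ℂ)

theorem specProj_sum {A : Matrix m m ℂ} (hA : A.IsHermitian) (c : m → ℂ) :
    ∑ i, c i • specProj hA i = (hA.eigenvectorUnitary : Matrix m m ℂ) * Matrix.diagonal c *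
    star (hA.eigenvectorUnitary : Matrix m m ℂ) := by
  have : Matrix.diagonal c = ∑ i, c i • Matrix.diagonal (Pi.single i (1:ℂ)) := by
    ext a b
    simp only [Matrix.sum_apply, Matrix.smul_apply, Matrix.diagonal_apply]
    by_cases h : a = b
    · subst h; simp [Pi.single_apply]
    · simp [h]
  rw [this, Finset.mul_sum, Finset.sum_mul]
  refine Finset.sum_congr rfl fun i _ => ?_
  simp [specProj]

theorem specProj_pdec {A : Matrix m m ℂ} (hA : A.IsHermitian) : PDec (specProj hA) := by
  have hU : star (hA.eigenvectorUnitary : Matrix m m ℂ) * (hA.eigenvectorUnitary : Matrix m m ℂ) = 1 :=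
    Unitary.coe_star_mul_self _
  have hU' : (hA.eigenvectorUnitary : Matrix m m ℂ) * star (hA.eigenvectorUnitary : Matrix m m ℂ) = 1 :=
    Unitary.coe_mul_star_self _
  have hmul : ∀ i j, specProj hA i * specProj hA j =
      (hA.eigenvectorUnitary : Matrix m m ℂ) * (Matrix.diagonal (Pi.single i 1) * Matrix.diagonal (Pi.single j 1)) *
    star (hA.eigenvectorUnitary : Matrix m m ℂ) := by
    intro i j
    unfold specProj
    have h3 : ∀ U D1 D2 V : Matrix m m ℂ, V * U = 1 → U * D1 * V * (U * D2 * V) = U * (D1 * D2) * V := by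
      intro U D1 D2 V h
      calc U * D1 * V * (U * D2 * V) = U * D1 * (V * U) * D2 * V := by simp only [mul_assoc]
        _ = U * (D1 * D2) * V := by rw [h, mul_one]; simp only [mul_assoc]
    exact h3 _ _ _ _ hU
  refine ⟨?_, ?_, ?_, ?_⟩
  · intro i
    unfold Matrix.IsHermitian specProj
    rw [Matrix.conjTranspose_mul, Matrix.conjTranspose_mul, Matrix.diagonal_conjTranspose, mul_assoc,
      Matrix.star_eq_conjTranspose, Matrix.conjTranspose_conjTranspose]
    congr 3
    ext k
    by_cases h : k = i <;> simp [Pi.single_apply, h]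
  · intro i
    rw [hmul, Matrix.diagonal_mul_diagonal]
    unfold specProj
    congr 3
    ext k
    by_cases h : k = i <;> simp [Pi.single_apply, h]
  · intro i j hij
    rw [hmul, Matrix.diagonal_mul_diagonal]
    have : (fun k => (Pi.single i 1 : m → ℂ) k * (Pi.single j 1 : m → ℂ) k) = 0 := by
      ext k
      by_cases h : k = i
      · subst h; simp [Pi.single_apply, hij]
      · simp [Pi.single_apply, h]
    rw [this]
    simp
  · have := specProj_sum hA (fun _ => 1)
    simp only [one_smul] at this
    rw [this]
    simp [hU']

theorem specProj_trace {A : Matrix m m ℂ} (hA : A.IsHermitian) (i : m) :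
    (specProj hA i).trace = 1 := by
  unfold specProj
  rw [Matrix.trace_mul_cycle, Unitary.coe_star_mul_self, one_mul, Matrix.trace_diagonal]
  simp

theorem matFun_spec {A : Matrix m m ℂ} (hA : A.IsHermitian) (g : ℝ → ℝ) :
    matFun g A = ∑ i, (g (hA.eigenvalues i) : ℂ) • specProj hA i := by
  rw [specProj_sum, matFun, dif_pos hA]

theorem spec_eq {A : Matrix m m ℂ} (hA : A.IsHermitian) :
    A = ∑ i, (hA.eigenvalues i : ℂ) • specProj hA i := by
  rw [specProj_sum]
  exact hA.spectral_theorem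

theorem exists_interp (s : Finset ℝ) (g : ℝ → ℝ) :
    ∃ P : Polynomial ℂ, ∀ x ∈ s, P.eval (x : ℂ) = (g x : ℂ) := by
  refine ⟨Lagrange.interpolate s (fun x => (x : ℂ)) (fun x => (g x : ℂ)), fun x hx => ?_⟩
  exact Lagrange.eval_interpolate_at_node (v := fun x : ℝ => (x : ℂ)) (fun x => (g x : ℂ))
    (fun a _ b _ h => Complex.ofReal_injective h) hx

theorem matFun_aeval {A : Matrix m m ℂ} (hA : A.IsHermitian) (g : ℝ → ℝ) (P : Polynomial ℂ)
    (hP : ∀ i, P.eval (hA.eigenvalues i : ℂ) = (g (hA.eigenvalues i) : ℂ)) :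
    matFun g A = Polynomial.aeval A P := by
  rw [matFun_spec hA]
  conv_rhs => rw [spec_eq hA]
  rw [(specProj_pdec hA).aeval]
  exact Finset.sum_congr rfl fun i _ => by rw [hP]

theorem exists_aeval {A : Matrix m m ℂ} (hA : A.IsHermitian) (g : ℝ → ℝ) :
    ∃ P : Polynomial ℂ, matFun g A = Polynomial.aeval A P := by
  obtain ⟨P, hP⟩ := exists_interp (Finset.univ.image hA.eigenvalues) g
  exact ⟨P, matFun_aeval hA g P fun i => hP _ (by simp)⟩

theorem matFun_dec {ι : Type*} [Fintype ι] {f : ι → Matrix m m ℂ} (hf : PDec f)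
    (p : ι → ℝ) (g : ℝ → ℝ) :
    matFun g (∑ j, (p j : ℂ) • f j) = ∑ j, (g (p j) : ℂ) • f j := by
  classical
  have hA := hf.isHermitian p
  obtain ⟨P, hP⟩ := exists_interp (Finset.univ.image hA.eigenvalues ∪ Finset.univ.image p) g
  rw [matFun_aeval hA g P fun i => hP _ (by simp), hf.aeval]
  refine Finset.sum_congr rfl fun j _ => ?_
  rw [hP]
  simp

/-- A decomposition of the identity into minimal projections of `B`. -/
structure MinDec (B : Subalgebra ℂ (Matrix m m ℂ)) {ι : Type*} [Fintype ι]
    (f : ι → Matrix m m ℂ) : Prop extends PDec f where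
  mem : ∀ j, f j ∈ B
  ne : ∀ j, f j ≠ 0
  min : ∀ j, ∀ a ∈ B, ∃ c : ℂ, f j * a * f j = c • f j

theorem proj_isHerm_pos {e : Matrix m m ℂ} (h : e.IsHermitian) (h2 : e * e = e) : e.PosSemidef := by
  have := Matrix.posSemidef_conjTranspose_mul_self e
  rwa [h.eq, h2] at this

theorem commute_aeval {q a : Matrix m m ℂ} (h : q * a = a * q) (P : Polynomial ℂ) :
    q * Polynomial.aeval a P = Polynomial.aeval a P * q := by
  induction P using Polynomial.induction_on' with
  | add P Q hP hQ => simp [add_mul, mul_add, hP, hQ]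
  | monomial i c =>
    have : q * a ^ i = a ^ i * q := (Commute.pow_right (show Commute q a from h) i)
    simp [Polynomial.aeval_monomial, Algebra.algebraMap_eq_smul_one, this]

theorem aeval_mem_alg {B : Subalgebra ℂ (Matrix m m ℂ)} {a : Matrix m m ℂ} (h : a ∈ B) (P : Polynomial ℂ) :
    Polynomial.aeval a P ∈ B := by
  have := Polynomial.aeval_mem_adjoin_singleton ℂ a (p := P)
  exact Algebra.adjoin_le (by simpa using h) this

theorem split_proj (B : Subalgebra ℂ (Matrix m m ℂ)) {q a : Matrix m m ℂ}
    (hq : q.IsHermitian) (hqq : q * q = q) (hqB : q ∈ B) (hq0 : q ≠ 0)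
    (ha : a.IsHermitian) (haB : a ∈ B) (h1 : q * a = a) (h2 : a * q = a)
    (hns : ¬ ∃ c : ℝ, a = (c : ℂ) • q) :
    ∃ q1 : Matrix m m ℂ, q1.IsHermitian ∧ q1 * q1 = q1 ∧ q1 ∈ B ∧ q1 ≠ 0 ∧ q1 ≠ q ∧
      q * q1 = q1 ∧ q1 * q = q1 ∧ q1 * a = a * q1 := by
  classical
  have hpd := specProj_pdec ha
  obtain ⟨E, hEdef⟩ : ∃ E : ℝ → Matrix m m ℂ, ∀ l,
      E l = matFun (fun x => if x = l then 1 else 0) a := ⟨_, fun _ => rfl⟩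
  have hE : ∀ l, E l = ∑ i, ((if ha.eigenvalues i = l then 1 else 0 : ℝ) : ℂ) • specProj ha i :=
    fun l => by rw [hEdef, matFun_spec ha]
  have hcomm : ∀ l, q * E l = E l * q := by
    intro l
    obtain ⟨P, hP⟩ := exists_aeval ha (fun x => if x = l then 1 else 0)
    rw [hEdef, hP]
    exact commute_aeval (h1.trans h2.symm) P
  have hEB : ∀ l, E l ∈ B := by
    intro l
    obtain ⟨P, hP⟩ := exists_aeval ha (fun x => if x = l then 1 else 0)
    rw [hEdef, hP]
    exact aeval_mem_alg haB P
  have hEH : ∀ l, (E l).IsHermitian := fun l => by rw [hE]; exact hpd.isHermitian _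
  have hEi : ∀ l, E l * E l = E l := by
    intro l
    apply hpd.ext_right
    intro k
    rw [mul_assoc, hE, hpd.sum_mul, Matrix.mul_smul, hpd.sum_mul, smul_smul]
    congr 1
    split_ifs <;> simp
  have hEa : ∀ l, E l * a = (l : ℂ) • E l := by
    intro l
    apply hpd.ext_right
    intro k
    have h4 : a * specProj ha k = (ha.eigenvalues k : ℂ) • specProj ha k := by
      have h5 := hpd.sum_mul (fun i => (ha.eigenvalues i : ℂ)) k
      rwa [← spec_eq ha] at h5
    rw [mul_assoc, hE, h4, Matrix.mul_smul, Matrix.smul_mul, hpd.sum_mul, smul_smul, smul_smul]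
    congr 1
    split_ifs with h <;> simp [h]
  have haE : ∀ l, a * E l = (l : ℂ) • E l := by
    intro l
    have := congrArg Matrix.conjTranspose (hEa l)
    rw [Matrix.conjTranspose_mul, ha.eq, (hEH l).eq, Matrix.conjTranspose_smul, (hEH l).eq] at this
    simpa using this
  have hne : ∃ l, q * E l ≠ 0 := by
    by_contra hcon
    push Not at hcon
    apply hq0
    apply hpd.ext_right
    intro k
    have h3 : E (ha.eigenvalues k) * specProj ha k = specProj ha k := by
      rw [hE, hpd.sum_mul]; simp
    rw [← h3, ← mul_assoc, hcon]
    simp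
  obtain ⟨l, hl⟩ := hne
  refine ⟨q * E l, ?_, ?_, B.mul_mem hqB (hEB l), hl, ?_, ?_, ?_, ?_⟩
  · unfold Matrix.IsHermitian
    rw [Matrix.conjTranspose_mul, hq.eq, (hEH l).eq, hcomm]
  · calc q * E l * (q * E l) = q * (E l * q) * E l := by simp only [mul_assoc]
      _ = (q * q) * (E l * E l) := by rw [← hcomm]; simp only [mul_assoc]
      _ = _ := by rw [hqq, hEi]
  · intro h
    apply hns
    refine ⟨l, ?_⟩
    rw [← h1]
    nth_rw 1 [← h]
    rw [mul_assoc, hEa, Matrix.mul_smul, h]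
  · rw [← mul_assoc, hqq]
  · rw [mul_assoc, ← hcomm, ← mul_assoc, hqq]
  · rw [mul_assoc, hEa, ← mul_assoc, h2, Matrix.mul_smul, ← h1]
    rw [mul_assoc, haE, Matrix.mul_smul]

theorem exists_minDec_aux (B : Subalgebra ℂ (Matrix m m ℂ)) (hB : ∀ a ∈ B, a.conjTranspose ∈ B)
    (W : Submodule ℂ (m → ℂ)) :
    ∀ q h : Matrix m m ℂ, LinearMap.range q.mulVecLin = W → q.IsHermitian → q * q = q → q ∈ B →
    h.IsHermitian → h ∈ B → q * h = h → h * q = h →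
    ∃ (ι : Type) (_ : Fintype ι) (f : ι → Matrix m m ℂ) (p : ι → ℝ),
      (∀ j, (f j).IsHermitian) ∧ (∀ j, f j * f j = f j) ∧ (∀ j k, j ≠ k → f j * f k = 0) ∧
      (∑ j, f j = q) ∧ (∀ j, f j ∈ B) ∧ (∀ j, f j ≠ 0) ∧
      (∀ j, ∀ a ∈ B, ∃ c : ℂ, f j * a * f j = c • f j) ∧ h = ∑ j, (p j : ℂ) • f j := by
  induction W using WellFoundedLT.induction with
  | ind W ih =>
  intro q h hW hq hqq hqB hh hhB h1 h2
  by_cases hq0 : q = 0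
  · subst hq0
    have h0 : h = 0 := by rw [← h1, zero_mul]
    refine ⟨Empty, inferInstance, fun _ => 0, fun _ => 0, ?_⟩
    simp [h0]
  -- splitting step
  have key : ∀ q1 : Matrix m m ℂ, q1.IsHermitian → q1 * q1 = q1 → q1 ∈ B → q1 ≠ 0 → q1 ≠ q →
      q * q1 = q1 → q1 * q = q1 → q1 * h = h * q1 →
      ∃ (ι : Type) (_ : Fintype ι) (f : ι → Matrix m m ℂ) (p : ι → ℝ),
      (∀ j, (f j).IsHermitian) ∧ (∀ j, f j * f j = f j) ∧ (∀ j k, j ≠ k → f j * f k = 0) ∧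
      (∑ j, f j = q) ∧ (∀ j, f j ∈ B) ∧ (∀ j, f j ≠ 0) ∧
      (∀ j, ∀ a ∈ B, ∃ c : ℂ, f j * a * f j = c • f j) ∧ h = ∑ j, (p j : ℂ) • f j := by
    intro q1 k1 k2 k3 k4 k5 k6 k7 k8
    have hlt : ∀ r s : Matrix m m ℂ, r * s = 0 → s * r = 0 → s ≠ 0 → s * s = s → q * r = r → q * s = s →
        LinearMap.range r.mulVecLin < W := by
      intro r s hrs hsr hs hss hqr hqs
      rw [← hW]
      refine lt_of_le_of_ne ?_ ?_
      · rintro _ ⟨v, rfl⟩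
        refine ⟨r.mulVec v, ?_⟩
        simp [Matrix.mulVec_mulVec, hqr]
      · intro heq
        apply hs
        apply Matrix.ext_of_mulVec_single
        intro i
        have : s.mulVec (Pi.single i 1) ∈ LinearMap.range r.mulVecLin := by
          rw [heq]
          exact ⟨s.mulVec (Pi.single i 1), by simp only [Matrix.mulVecLin_apply, Matrix.mulVec_mulVec, hqs]⟩
        obtain ⟨w, hw⟩ := this
        rw [Matrix.mulVecLin_apply] at hw
        rw [← hss, ← Matrix.mulVec_mulVec, ← hw, Matrix.mulVec_mulVec, hsr, Matrix.zero_mulVec, Matrix.zero_mulVec]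
    have l1 : q1 * (q - q1) = 0 := by rw [mul_sub, k7, k2, sub_self]
    have l2 : (q - q1) * q1 = 0 := by rw [sub_mul, k6, k2, sub_self]
    have l3 : (q - q1) * (q - q1) = q - q1 := by
      rw [sub_mul, mul_sub, mul_sub, hqq, k6, k7, k2]; simp
    have l4 : q * (q - q1) = q - q1 := by rw [mul_sub, hqq, k6]
    have l5 : q - q1 ≠ 0 := fun h => k5 (sub_eq_zero.1 h).symm
    have l6 : (q - q1).IsHermitian := hq.sub k1
    have l7 : q - q1 ∈ B := B.sub_mem hqB k3
    have m1 : (q1 * h).IsHermitian := by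
      unfold Matrix.IsHermitian; rw [Matrix.conjTranspose_mul, k1.eq, hh.eq, k8]
    have l8 : (q - q1) * h = h * (q - q1) := by rw [sub_mul, mul_sub, h1, h2, k8]
    have m2 : ((q - q1) * h).IsHermitian := by
      unfold Matrix.IsHermitian; rw [Matrix.conjTranspose_mul, l6.eq, hh.eq, l8]
    obtain ⟨ι1, i1, f, p, a1, a2, a3, a4, a5, a6, a7, a8⟩ :=
      ih _ (hlt q1 (q - q1) l1 l2 l5 l3 k6 l4) q1 (q1 * h) rfl k1 k2 k3 m1 (B.mul_mem k3 hhB)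
        (by rw [← mul_assoc, k2]) (by rw [mul_assoc, ← k8, ← mul_assoc, k2])
    obtain ⟨ι2, i2, g, r, b1, b2, b3, b4, b5, b6, b7, b8⟩ :=
      ih _ (hlt (q - q1) q1 l2 l1 k4 k2 l4 k6) (q - q1) ((q - q1) * h) rfl l6 l3 l7 m2
        (B.mul_mem l7 hhB) (by rw [← mul_assoc, l3]) (by rw [mul_assoc, ← l8, ← mul_assoc, l3])
    have fq : ∀ j, f j * q1 = f j := by
      intro j
      rw [← a4, Finset.mul_sum, Finset.sum_eq_single j, a2]
      · intro k _ hk; exact a3 j k hk.symm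
      · simp
    have qf : ∀ j, q1 * f j = f j := by
      intro j
      rw [← a4, Finset.sum_mul, Finset.sum_eq_single j, a2]
      · intro k _ hk; exact a3 k j hk
      · simp
    have gq : ∀ j, g j * (q - q1) = g j := by
      intro j
      rw [← b4, Finset.mul_sum, Finset.sum_eq_single j, b2]
      · intro k _ hk; exact b3 j k hk.symm
      · simp
    have qg : ∀ j, (q - q1) * g j = g j := by
      intro j
      rw [← b4, Finset.sum_mul, Finset.sum_eq_single j, b2]
      · intro k _ hk; exact b3 k j hk
      · simp
    refine ⟨ι1 ⊕ ι2, inferInstance, Sum.elim f g, Sum.elim p r, ?_, ?_, ?_, ?_, ?_, ?_, ?_, ?_⟩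
    · rintro (j | j) <;> simp [a1, b1]
    · rintro (j | j) <;> simp [a2, b2]
    · rintro (j | j) (k | k) hjk
      · exact a3 j k (fun h => hjk (by rw [h]))
      · show f j * g k = 0
        rw [← fq j, ← qg k, mul_assoc, ← mul_assoc q1, l1]; simp
      · show g j * f k = 0
        rw [← gq j, ← qf k, mul_assoc, ← mul_assoc (q - q1), l2]; simp
      · exact b3 j k (fun h => hjk (by rw [h]))
    · simp [a4, b4]
    · rintro (j | j) <;> simp [a5, b5]
    · rintro (j | j) <;> simp [a6, b6]
    · rintro (j | j)
      · exact a7 j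
      · exact b7 j
    · simp only [Fintype.sum_sum_type, Sum.elim_inl, Sum.elim_inr]
      rw [← a8, ← b8, ← add_mul, add_sub_cancel, h1]
  by_cases hs : ∃ c : ℝ, h = (c : ℂ) • q
  · obtain ⟨c, hc⟩ := hs
    by_cases hmin : ∀ a ∈ B, a.IsHermitian → ∃ c : ℝ, q * a * q = (c : ℂ) • q
    · refine ⟨Unit, inferInstance, fun _ => q, fun _ => c, by simp [hq], by simp [hqq], by simp, by simp,
        by simp [hqB], by simp [hq0], ?_, by simp [hc]⟩
      intro _ a haB
      have e1 : (a + a.conjTranspose).IsHermitian := Matrix.isHermitian_add_transpose_self a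
      have e2 : (Complex.I • (a - a.conjTranspose)).IsHermitian := by
        unfold Matrix.IsHermitian
        rw [Matrix.conjTranspose_smul, Matrix.conjTranspose_sub, Matrix.conjTranspose_conjTranspose]
        simp [smul_sub]
        abel
      obtain ⟨c1, hc1⟩ := hmin _ (B.add_mem haB (hB a haB)) e1
      obtain ⟨c2, hc2⟩ := hmin _ (B.smul_mem (B.sub_mem haB (hB a haB)) Complex.I) e2
      refine ⟨(c1 : ℂ) / 2 - Complex.I * c2 / 2, ?_⟩
      have e3 : a = (1/2 : ℂ) • (a + a.conjTranspose) - (Complex.I / 2) • (Complex.I • (a - a.conjTranspose)) := by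
        rw [smul_smul, div_mul_eq_mul_div, Complex.I_mul_I]
        module
      conv_lhs => rw [e3]
      rw [mul_sub, sub_mul, Matrix.mul_smul, Matrix.smul_mul, hc1, Matrix.mul_smul, Matrix.smul_mul, hc2]
      module
    · push Not at hmin
      obtain ⟨a, haB, ha, hna⟩ := hmin
      have e1 : (q * a * q).IsHermitian := by
        unfold Matrix.IsHermitian
        rw [Matrix.conjTranspose_mul, Matrix.conjTranspose_mul, hq.eq, ha.eq, mul_assoc]
      obtain ⟨q1, k1, k2, k3, k4, k5, k6, k7, k8⟩ := split_proj B hq hqq hqB hq0 e1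
        (B.mul_mem (B.mul_mem hqB haB) hqB) (by rw [← mul_assoc, ← mul_assoc, hqq])
        (by rw [mul_assoc, hqq]) (by push Not; exact hna)
      refine key q1 k1 k2 k3 k4 k5 k6 k7 ?_
      rw [hc, Matrix.mul_smul, Matrix.smul_mul, k6, k7]
  · obtain ⟨q1, k1, k2, k3, k4, k5, k6, k7, k8⟩ := split_proj B hq hqq hqB hq0 hh hhB h1 h2 hs
    exact key q1 k1 k2 k3 k4 k5 k6 k7 k8

theorem exists_minDec (B : Subalgebra ℂ (Matrix m m ℂ)) (hB : ∀ a ∈ B, a.conjTranspose ∈ B)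
    {h : Matrix m m ℂ} (hh : h.IsHermitian) (hhB : h ∈ B) :
    ∃ (ι : Type) (_ : Fintype ι) (f : ι → Matrix m m ℂ) (p : ι → ℝ),
      MinDec B f ∧ h = ∑ j, (p j : ℂ) • f j := by
  obtain ⟨ι, i, f, p, a1, a2, a3, a4, a5, a6, a7, a8⟩ :=
    exists_minDec_aux B hB _ 1 h rfl Matrix.isHermitian_one (one_mul 1) B.one_mem hh hhB (one_mul h) (mul_one h)
  exact ⟨ι, i, f, p, ⟨⟨a1, a2, a3, a4⟩, a5, a6, a7⟩, a8⟩

theorem trace_eq_of_mul_ne (B : Subalgebra ℂ (Matrix m m ℂ)) {ι κ : Type*} [Fintype ι] [Fintype κ]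
    {f : ι → Matrix m m ℂ} {e : κ → Matrix m m ℂ} (hf : MinDec B f) (he : MinDec B e) (j : ι) (k : κ)
    (h : e k * f j ≠ 0) : (e k).trace = (f j).trace := by
  obtain ⟨c, hc⟩ := he.min k (f j) (hf.mem j)
  obtain ⟨c', hc'⟩ := hf.min j (e k) (he.mem k)
  have h1 : c • (e k * f j) = c' • (e k * f j) := by
    rw [← Matrix.smul_mul, ← hc, ← Matrix.mul_smul, ← hc']
    simp only [mul_assoc]
  have hcc : c = c' := by
    by_contra hne
    apply h
    have : (c - c') • (e k * f j) = 0 := by rw [sub_smul, h1, sub_self]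
    exact (smul_eq_zero.1 this).resolve_left (sub_ne_zero.2 hne)
  have hc0 : c ≠ 0 := by
    intro h0
    apply h
    rw [h0, zero_smul] at hc
    have h3 : (e k * f j) * (e k * f j).conjTranspose = 0 := by
      rw [Matrix.conjTranspose_mul, (hf.herm j).eq, (he.herm k).eq, mul_assoc, ← mul_assoc (f j),
        hf.idem, ← mul_assoc, hc]
    exact Matrix.self_mul_conjTranspose_eq_zero.1 h3
  have t1 : (e k * f j * e k).trace = (f j * e k * f j).trace := by
    rw [Matrix.trace_mul_cycle, he.idem, Matrix.trace_mul_cycle, hf.idem, Matrix.trace_mul_comm]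
  rw [hc, hc', Matrix.trace_smul, Matrix.trace_smul, hcc] at t1
  exact mul_left_cancel₀ (hcc ▸ hc0) t1

/-- the universal operator. -/
def tauOf {ι : Type*} [Fintype ι] (f : ι → Matrix m m ℂ) : Matrix m m ℂ :=
  ∑ j, (((f j).trace.re⁻¹ : ℝ) : ℂ) • f j

theorem tauOf_eq (B : Subalgebra ℂ (Matrix m m ℂ)) {ι κ : Type*} [Fintype ι] [Fintype κ]
    {f : ι → Matrix m m ℂ} {e : κ → Matrix m m ℂ} (hf : MinDec B f) (he : MinDec B e) :
    tauOf f = tauOf e := by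
  apply he.ext_right
  intro k
  unfold tauOf
  rw [he.sum_mul]
  apply (hf.ext_right (A := ((∑ j, (((f j).trace.re⁻¹ : ℝ) : ℂ) • f j) * e k).conjTranspose)
    (B := (((((e k).trace.re⁻¹ : ℝ) : ℂ) • e k)).conjTranspose) ?_ |> fun h => Matrix.conjTranspose_injective h)
  intro j
  rw [Matrix.conjTranspose_mul, (hf.isHermitian _).eq, (he.herm k).eq, mul_assoc, hf.sum_mul,
    Matrix.conjTranspose_smul, (he.herm k).eq, Matrix.mul_smul, Matrix.smul_mul]
  by_cases h : e k * f j = 0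
  · simp [h]
  · rw [trace_eq_of_mul_ne B hf he j k h]; simp

theorem psd_factor {A : Matrix m m ℂ} (hA : A.PosSemidef) : ∃ D : Matrix m m ℂ, A = D.conjTranspose * D := by
  have hp := specProj_pdec hA.1
  refine ⟨∑ i, ((Real.sqrt (hA.1.eigenvalues i) : ℝ) : ℂ) • specProj hA.1 i, ?_⟩
  rw [(hp.isHermitian _).eq]
  apply hp.ext_right
  intro k
  rw [mul_assoc, hp.sum_mul, Matrix.mul_smul, hp.sum_mul, smul_smul, ← Complex.ofReal_mul,
    Real.mul_self_sqrt (hA.eigenvalues_nonneg k)]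
  have := hp.sum_mul (fun i => ((hA.1.eigenvalues i : ℝ) : ℂ)) k
  rwa [← spec_eq hA.1] at this

theorem trace_mul_psd_nonneg {A C : Matrix m m ℂ} (hA : A.PosSemidef) (hC : C.PosSemidef) :
    0 ≤ (A * C).trace := by
  obtain ⟨D, rfl⟩ := psd_factor hA
  have := (hC.mul_mul_conjTranspose_same D).trace_nonneg
  rwa [← Matrix.trace_mul_cycle, mul_assoc, Matrix.trace_mul_comm] at this

theorem MinDec.trace_pos {B : Subalgebra ℂ (Matrix m m ℂ)} {ι : Type*} [Fintype ι]
    {f : ι → Matrix m m ℂ} (hf : MinDec B f) (j : ι) : 0 < (f j).trace.re ∧ (f j).trace = ((f j).trace.re : ℂ) := by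
  have hp := proj_isHerm_pos (hf.herm j) (hf.idem j)
  have h1 := hp.trace_nonneg
  have h2 : (f j).trace ≠ 0 := fun h => hf.ne j (hp.trace_eq_zero_iff.1 h)
  rw [Complex.le_def] at h1
  have h3 : (f j).trace = ((f j).trace.re : ℂ) := by
    apply Complex.ext <;> simp
    exact h1.2.symm
  refine ⟨lt_of_le_of_ne h1.1 ?_, h3⟩
  intro h
  apply h2
  rw [h3, ← h]
  simp

end Part1

section Part2

variable {n d : ℕ}

theorem tensorFam_mul {κ : Type*} [Fintype κ] [DecidableEq κ] {δ : Type*} [Fintype δ] (X Y : κ → Matrix δ δ ℂ) :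
    tensorFam X * tensorFam Y = tensorFam (fun k => X k * Y k) := by
  ext i j
  simp only [tensorFam, Matrix.mul_apply, Matrix.of_apply]
  rw [Finset.prod_univ_sum, Fintype.piFinset_univ]
  exact Finset.sum_congr rfl fun p _ => Finset.prod_mul_distrib.symm

theorem tensorFam_one {κ : Type*} [Fintype κ] [DecidableEq κ] {δ : Type*} [Fintype δ] [DecidableEq δ] :
    tensorFam (fun _ : κ => (1 : Matrix δ δ ℂ)) = 1 := by
  ext i j
  simp only [tensorFam, Matrix.of_apply, Matrix.one_apply]
  rw [Finset.prod_ite_zero]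
  simp [funext_iff]

theorem tensorFam_conj {κ : Type*} [Fintype κ] {δ : Type*} (X : κ → Matrix δ δ ℂ) :
    (tensorFam X).conjTranspose = tensorFam (fun k => (X k).conjTranspose) := by
  ext i j
  simp [tensorFam, Matrix.conjTranspose_apply]

theorem tensorFam_trace {κ : Type*} [Fintype κ] [DecidableEq κ] {δ : Type*} [Fintype δ] (X : κ → Matrix δ δ ℂ) :
    (tensorFam X).trace = ∏ k, (X k).trace := by
  simp only [tensorFam, Matrix.trace, Matrix.diag, Matrix.of_apply]
  rw [Finset.prod_univ_sum, Fintype.piFinset_univ]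

theorem tensorFam_posSemidef {κ : Type*} [Fintype κ] [DecidableEq κ] {δ : Type*} [Fintype δ] [DecidableEq δ]
    {X : κ → Matrix δ δ ℂ} (hX : ∀ k, (X k).PosSemidef) : (tensorFam X).PosSemidef := by
  choose D hD using fun k => psd_factor (hX k)
  have : tensorFam X = (tensorFam D).conjTranspose * tensorFam D := by
    rw [tensorFam_conj, tensorFam_mul]
    congr 1
    funext k
    exact hD k
  rw [this]
  exact Matrix.posSemidef_conjTranspose_mul_self _

theorem tensorFam_sum {κ : Type*} [Fintype κ] [DecidableEq κ] {δ σ : Type*} [Fintype σ]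
    (c : κ → σ → ℂ) (A : κ → σ → Matrix δ δ ℂ) :
    tensorFam (fun k => ∑ s, c k s • A k s) =
      ∑ sv : κ → σ, (∏ k, c k (sv k)) • tensorFam (fun k => A k (sv k)) := by
  ext i j
  simp only [tensorFam, Matrix.of_apply, Matrix.sum_apply, Matrix.smul_apply, smul_eq_mul]
  rw [Finset.prod_univ_sum, Fintype.piFinset_univ]
  exact Finset.sum_congr rfl fun p _ => Finset.prod_mul_distrib

theorem tensorFam_smul {κ : Type*} [Fintype κ] {δ : Type*}
    (c : κ → ℂ) (A : κ → Matrix δ δ ℂ) :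
    tensorFam (fun k => c k • A k) = (∏ k, c k) • tensorFam A := by
  ext i j
  simp only [tensorFam, Matrix.of_apply, Matrix.smul_apply, smul_eq_mul]
  exact Finset.prod_mul_distrib

/-- The algebra spanned by the tensors `⊗ X (x k)`. -/
def Bx {𝒳 : Type*} (d : ℕ) (x : Fin n → 𝒳) :
    Subalgebra ℂ (Matrix (Fin n → Fin d) (Fin n → Fin d) ℂ) :=
  Submodule.toSubalgebra
    (Submodule.span ℂ (Set.range fun X : 𝒳 → Matrix (Fin d) (Fin d) ℂ =>
      tensorFam (fun k => X (x k))))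
    (Submodule.subset_span ⟨fun _ => 1, tensorFam_one⟩)
    (by
      intro a b ha hb
      induction ha using Submodule.span_induction with
      | zero => simp
      | add a a' _ _ h h' => rw [add_mul]; exact Submodule.add_mem _ h h'
      | smul c a _ h => rw [Matrix.smul_mul]; exact Submodule.smul_mem _ c h
      | mem a ha =>
        obtain ⟨X, rfl⟩ := ha
        induction hb using Submodule.span_induction with
        | zero => simp
        | add a a' _ _ h h' => rw [mul_add]; exact Submodule.add_mem _ h h'
        | smul c a _ h => rw [Matrix.mul_smul]; exact Submodule.smul_mem _ c h
        | mem b hb =>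
          obtain ⟨Y, rfl⟩ := hb
          refine Submodule.subset_span ⟨fun a => X a * Y a, ?_⟩
          simp only
          rw [tensorFam_mul])

theorem mem_Bx {𝒳 : Type*} {x : Fin n → 𝒳} {a : Matrix (Fin n → Fin d) (Fin n → Fin d) ℂ} :
    a ∈ Bx d x ↔ a ∈ Submodule.span ℂ (Set.range fun X : 𝒳 → Matrix (Fin d) (Fin d) ℂ =>
      tensorFam (fun k => X (x k))) := Iff.rfl

theorem tensor_mem_Bx {𝒳 : Type*} (x : Fin n → 𝒳) (X : 𝒳 → Matrix (Fin d) (Fin d) ℂ) :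
    tensorFam (fun k => X (x k)) ∈ Bx d x := Submodule.subset_span ⟨X, rfl⟩

theorem Bx_conj {𝒳 : Type*} (x : Fin n → 𝒳) :
    ∀ a ∈ Bx d x, a.conjTranspose ∈ Bx d x := by
  intro a ha
  rw [mem_Bx] at ha ⊢
  induction ha using Submodule.span_induction with
  | zero => simp
  | add a a' _ _ h h' => rw [Matrix.conjTranspose_add]; exact Submodule.add_mem _ h h'
  | smul c a _ h => rw [Matrix.conjTranspose_smul]; exact Submodule.smul_mem _ _ h
  | mem a ha =>
    obtain ⟨X, rfl⟩ := ha
    simp only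
    rw [tensorFam_conj]
    exact Submodule.subset_span ⟨fun a => (X a).conjTranspose, rfl⟩

theorem Bx_const_le {𝒳 : Type*} (x : Fin n → 𝒳) : Bx d (fun _ : Fin n => ()) ≤ Bx d x := by
  intro a ha
  rw [mem_Bx] at ha ⊢
  refine Submodule.span_mono ?_ ha
  rintro _ ⟨X, rfl⟩
  exact ⟨fun _ => X (), rfl⟩

/-- upper unitriangular -/
def UU (N : Matrix (Fin d) (Fin d) ℂ) : Prop := (∀ i j, j < i → N i j = 0) ∧ ∀ i, N i i = 1

theorem exists_hw {𝒳 : Type*} (x : Fin n → 𝒳) (v : (Fin n → Fin d) → ℂ) (hv : v ≠ 0) :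
    ∃ b ∈ Bx d x, b.mulVec v ≠ 0 ∧ ∀ N : 𝒳 → Matrix (Fin d) (Fin d) ℂ, (∀ a, UU (N a)) →
      (tensorFam (fun k => N (x k))).mulVec (b.mulVec v) = b.mulVec v := by
  classical
  let P : ℕ → Prop := fun h => ∃ b ∈ Bx d x, b.mulVec v ≠ 0 ∧
    ∀ i : Fin n → Fin d, h ≤ ∑ k, (i k : ℕ) → b.mulVec v i = 0
  have hex : ∃ h, P h := by
    refine ⟨n * d + 1, 1, (Bx d x).one_mem, by simpa using hv, ?_⟩
    intro i hi
    exfalso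
    have : ∑ k, (i k : ℕ) ≤ ∑ k : Fin n, d := Finset.sum_le_sum fun k _ => (i k).2.le
    simp at this
    omega
  obtain ⟨b, hb, hbv, hs⟩ := Nat.find_spec hex
  refine ⟨b, hb, hbv, fun N hN => ?_⟩
  by_contra hne
  have hpos : Nat.find hex ≠ 0 := by
    intro h0
    apply hbv
    funext i
    exact hs i (by omega)
  apply Nat.find_min hex (m := Nat.find hex - 1) (by omega)
  have hbv' : ((tensorFam (fun k => N (x k)) - 1) * b).mulVec v =
      (tensorFam (fun k => N (x k))).mulVec (b.mulVec v) - b.mulVec v := by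
    rw [sub_mul, one_mul, Matrix.sub_mulVec, Matrix.mulVec_mulVec]
  refine ⟨(tensorFam (fun k => N (x k)) - 1) * b,
    (Bx d x).mul_mem ((Bx d x).sub_mem (tensor_mem_Bx x N) (Bx d x).one_mem) hb, ?_, ?_⟩
  · rw [hbv']
    exact sub_ne_zero.2 hne
  · intro i hi
    rw [hbv', Pi.sub_apply, sub_eq_zero]
    set w := b.mulVec v
    have : (tensorFam (fun k => N (x k))).mulVec w i =
      ∑ j, (∏ k, N (x k) (i k) (j k)) * w j := rfl
    rw [this, Finset.sum_eq_single i]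
    · simp [(hN _).2]
    · intro j _ hj
      by_cases hall : ∀ k, i k ≤ j k
      · have hlt : ∑ k, (i k : ℕ) < ∑ k, (j k : ℕ) := by
          apply Finset.sum_lt_sum
          · exact fun k _ => hall k
          · by_contra hcon
            push Not at hcon
            apply hj
            funext k
            exact le_antisymm (Fin.le_def.2 (hcon k (Finset.mem_univ k))) (hall k)
        rw [hs j (by omega), mul_zero]
      · push Not at hall
        obtain ⟨k, hk⟩ := hall
        rw [Finset.prod_eq_zero (Finset.mem_univ k) ((hN _).1 _ _ hk), zero_mul]
    · simp

/-- Polynomial curves. -/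
theorem curve_mem {𝒳 : Type*} (x : Fin n → 𝒳)
    (W : Submodule ℂ (Matrix (Fin n → Fin d) (Fin n → Fin d) ℂ))
    (A B : 𝒳 → Matrix (Fin d) (Fin d) ℂ)
    (h : {z : ℂ | tensorFam (fun k => A (x k) + z • B (x k)) ∈ W}.Infinite) (z : ℂ) :
    tensorFam (fun k => A (x k) + z • B (x k)) ∈ W := by
  by_contra hz
  obtain ⟨φ, hφ, hW⟩ := Submodule.exists_le_ker_of_notMem hz
  let p : Polynomial ℂ := ∑ i : Fin n → Fin d, ∑ j : Fin n → Fin d,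
    Polynomial.C (φ (Matrix.single i j 1)) *
      ∏ k, (Polynomial.C (A (x k) (i k) (j k)) + Polynomial.X * Polynomial.C (B (x k) (i k) (j k)))
  have hp : ∀ z, p.eval z = φ (tensorFam (fun k => A (x k) + z • B (x k))) := by
    intro z
    rw [Matrix.matrix_eq_sum_single (tensorFam (fun k => A (x k) + z • B (x k)))]
    simp only [map_sum]
    simp only [p, Polynomial.eval_finset_sum, Polynomial.eval_mul, Polynomial.eval_C,
      Polynomial.eval_prod, Polynomial.eval_add, Polynomial.eval_X]
    refine Finset.sum_congr rfl fun i _ => Finset.sum_congr rfl fun j _ => ?_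
    have : Matrix.single i j (tensorFam (fun k => A (x k) + z • B (x k)) i j) =
      (tensorFam (fun k => A (x k) + z • B (x k)) i j) • Matrix.single i j (1:ℂ) := by simp
    rw [this, map_smul, smul_eq_mul, mul_comm]
    rfl
  have hp0 : p = 0 := by
    apply Polynomial.eq_zero_of_infinite_isRoot
    refine h.mono ?_
    intro z hz
    have := hW hz
    rw [Set.mem_setOf_eq, Polynomial.IsRoot, hp]
    exact this
  apply hφ
  rw [← hp, hp0, Polynomial.eval_zero]

end Part2

section Part3

variable {n d : ℕ}

theorem lu_posDef {X : Matrix (Fin d) (Fin d) ℂ} (hX : X.PosDef) :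
    ∃ Y N : Matrix (Fin d) (Fin d) ℂ, X = Y * N ∧ (∀ i j, i < j → Y i j = 0) ∧ UU N := by
  let K := LDL.lowerInv hX
  haveI : Invertible K := LDL.invertibleLowerInv hX
  have hK : K.BlockTriangular OrderDual.toDual := fun i j h => LDL.lowerInv_triangular hX h
  let L := LDL.lower hX
  have hL : L.BlockTriangular OrderDual.toDual := Matrix.blockTriangular_inv_of_blockTriangular hK
  have hL' : ∀ i j, i < j → L i j = 0 := fun i j h => hL h
  have hdet : L.det ≠ 0 := by
    have : L.det * K.det = 1 := by
      rw [← Matrix.det_mul]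
      have : L * K = 1 := Matrix.inv_mul_of_invertible K
      rw [this, Matrix.det_one]
    exact left_ne_zero_of_mul_eq_one this
  rw [Matrix.det_of_isLowerTriangular L hL] at hdet
  have hd : ∀ i, L i i ≠ 0 := fun i => Finset.prod_ne_zero_iff.1 hdet i (Finset.mem_univ i)
  refine ⟨L * LDL.diag hX * Matrix.diagonal (fun i => star (L i i)),
    Matrix.diagonal (fun i => (star (L i i))⁻¹) * L.conjTranspose, ?_, ?_, ?_, ?_⟩
  · conv_lhs => rw [← LDL.lower_conj_diag hX]
    rw [mul_assoc _ (Matrix.diagonal _), ← mul_assoc (Matrix.diagonal _) (Matrix.diagonal _),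
      Matrix.diagonal_mul_diagonal]
    have : (fun i => star (L i i) * (star (L i i))⁻¹) = fun _ => (1:ℂ) := by
      funext i
      exact mul_inv_cancel₀ (star_ne_zero.2 (hd i))
    rw [this, Matrix.diagonal_one, one_mul]
  · intro i j h
    rw [LDL.diag, mul_assoc, Matrix.diagonal_mul_diagonal, Matrix.mul_diagonal, hL' i j h, zero_mul]
  · intro i j h
    rw [Matrix.diagonal_mul, Matrix.conjTranspose_apply, hL' j i h]
    simp
  · intro i
    rw [Matrix.diagonal_mul, Matrix.conjTranspose_apply]
    exact inv_mul_cancel₀ (star_ne_zero.2 (hd i))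

theorem posDef_shift {m : Type*} [Fintype m] [DecidableEq m] {H : Matrix m m ℂ} (hH : H.IsHermitian) :
    ∃ c0 : ℝ, ∀ c : ℝ, c0 ≤ c → ((c : ℂ) • (1 : Matrix m m ℂ) + H).PosDef := by
  refine ⟨1 + ∑ i, |hH.eigenvalues i|, fun c hc => ?_⟩
  have : ((c : ℂ) • (1 : Matrix m m ℂ) + H) = 1 +
      ∑ i, ((c - 1 + hH.eigenvalues i : ℝ) : ℂ) • specProj hH i := by
    conv_lhs => rw [spec_eq hH]
    have h1 : (1 : Matrix m m ℂ) = ∑ i, specProj hH i := (specProj_pdec hH).sum.symm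
    simp only [Complex.ofReal_add, add_smul, Finset.sum_add_distrib]
    rw [← Finset.smul_sum, ← h1, ← add_assoc]
    congr 1
    simp [sub_smul]
  rw [this]
  refine Matrix.PosDef.one.add_posSemidef ?_
  refine Matrix.posSemidef_sum _ fun i _ => ?_
  refine Matrix.PosSemidef.smul (proj_isHerm_pos ((specProj_pdec hH).herm i) ((specProj_pdec hH).idem i)) ?_
  rw [Complex.zero_le_real]
  have h1 : |hH.eigenvalues i| ≤ ∑ i, |hH.eigenvalues i| :=
    Finset.single_le_sum (f := fun i => |hH.eigenvalues i|) (fun j _ => abs_nonneg _) (Finset.mem_univ i)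
  have := neg_abs_le (hH.eigenvalues i)
  linarith

theorem posDef_density {𝒳 : Type*} [Finite 𝒳] (x : Fin n → 𝒳)
    (W : Submodule ℂ (Matrix (Fin n → Fin d) (Fin n → Fin d) ℂ))
    (hW : ∀ X : 𝒳 → Matrix (Fin d) (Fin d) ℂ, (∀ a, (X a).PosDef) → tensorFam (fun k => X (x k)) ∈ W)
    (X : 𝒳 → Matrix (Fin d) (Fin d) ℂ) : tensorFam (fun k => X (x k)) ∈ W := by
  classical
  haveI := Fintype.ofFinite 𝒳
  let H1 : 𝒳 → Matrix (Fin d) (Fin d) ℂ := fun a => (1/2 : ℂ) • (X a + (X a).conjTranspose)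
  let H2 : 𝒳 → Matrix (Fin d) (Fin d) ℂ := fun a => (-Complex.I/2 : ℂ) • (X a - (X a).conjTranspose)
  have hH1 : ∀ a, (H1 a).IsHermitian := by
    intro a
    simp only [H1, Matrix.IsHermitian, Matrix.conjTranspose_smul, Matrix.conjTranspose_add,
      Matrix.conjTranspose_conjTranspose]
    rw [add_comm]
    congr 1
    simp
  have hH2 : ∀ a, (H2 a).IsHermitian := by
    intro a
    simp only [H2, Matrix.IsHermitian, Matrix.conjTranspose_smul, Matrix.conjTranspose_sub,
      Matrix.conjTranspose_conjTranspose]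
    rw [← neg_sub, smul_neg, ← neg_smul]
    congr 1
    simp
    ring
  have hX : ∀ a, X a = H1 a + Complex.I • H2 a := by
    intro a
    simp only [H1, H2, smul_smul]
    have : Complex.I * (-Complex.I / 2) = 1 / 2 := by
      rw [mul_div_assoc', mul_neg, Complex.I_mul_I, neg_neg]
    rw [this, ← smul_add]
    ext i j
    simp
    ring
  choose c1 hc1 using fun a => posDef_shift (hH1 a)
  choose c2 hc2 using fun a => posDef_shift ((hH1 a).add (hH2 a))
  obtain ⟨c0, hc0⟩ : ∃ c0 : ℝ, ∀ a, c1 a ≤ c0 ∧ c2 a ≤ c0 := by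
    refine ⟨∑ a, (|c1 a| + |c2 a|), fun a => ?_⟩
    have h := Finset.single_le_sum (f := fun a => |c1 a| + |c2 a|) (fun j _ => by positivity) (Finset.mem_univ a)
    constructor
    · linarith [le_abs_self (c1 a), abs_nonneg (c2 a)]
    · linarith [le_abs_self (c2 a), abs_nonneg (c1 a)]
  have key : ∀ c : ℝ, c0 ≤ c → tensorFam (fun k => X (x k) + (c : ℂ) • (1 : Matrix (Fin d) (Fin d) ℂ)) ∈ W := by
    intro c hc
    have h := curve_mem x W (fun a => (c : ℂ) • (1 : Matrix (Fin d) (Fin d) ℂ) + H1 a) H2 ?_ Complex.I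
    · convert h using 3 with k
      rw [hX, add_comm, add_assoc]
    · refine Set.Infinite.mono (s := (fun s : ℝ => (s : ℂ)) '' Set.Ioo 0 1) ?_ ?_
      · rintro _ ⟨s, hs, rfl⟩
        refine hW (fun a => (c : ℂ) • (1 : Matrix (Fin d) (Fin d) ℂ) + H1 a + (s : ℂ) • H2 a) fun a => ?_
        have e : (c : ℂ) • (1 : Matrix (Fin d) (Fin d) ℂ) + H1 a + (s : ℂ) • H2 a =
          ((1 - s : ℝ) : ℂ) • ((c : ℂ) • (1 : Matrix (Fin d) (Fin d) ℂ) + H1 a) +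
          (s : ℂ) • ((c : ℂ) • (1 : Matrix (Fin d) (Fin d) ℂ) + (H1 a + H2 a)) := by
          push_cast
          module
        rw [e]
        refine Matrix.PosDef.add ?_ ?_
        · refine (hc1 a c ((hc0 a).1.trans hc)).smul ?_
          rw [Complex.zero_lt_real]
          linarith [hs.2]
        · refine (hc2 a c ((hc0 a).2.trans hc)).smul ?_
          rw [Complex.zero_lt_real]
          exact hs.1
      · exact (Set.Ioo_infinite one_pos).image Complex.ofReal_injective.injOn
  have h := curve_mem x W X (fun _ => 1) ?_ 0
  · simpa using h
  · refine Set.Infinite.mono (s := (fun s : ℝ => (s : ℂ)) '' Set.Ici c0) ?_ ?_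
    · rintro _ ⟨s, hs, rfl⟩
      exact key s hs
    · exact (Set.Ici_infinite c0).image Complex.ofReal_injective.injOn

/-- index pairs on or below the diagonal -/
abbrev LowP (d : ℕ) : Type := {p : Fin d × Fin d // p.2 ≤ p.1}

theorem card_piAntidiag_univ {κ : Type*} [Fintype κ] [DecidableEq κ] (N : ℕ) :
    (Finset.piAntidiag (Finset.univ : Finset κ) N).card = Nat.multichoose (Fintype.card κ) N := by
  rw [← Finset.map_sym_eq_piAntidiag, Finset.card_map, Finset.sym_univ, Finset.card_univ,
    Sym.card_sym_eq_multichoose]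

/-- number of positions of `x` equal to `a` -/
def occ {𝒳 : Type*} [DecidableEq 𝒳] (x : Fin n → 𝒳) (a : 𝒳) : ℕ := (Finset.univ.filter fun k => x k = a).card

/-- span of lower triangular tensors -/
def lowSpan {𝒳 : Type*} (d : ℕ) (x : Fin n → 𝒳) : Submodule ℂ (Matrix (Fin n → Fin d) (Fin n → Fin d) ℂ) :=
  Submodule.span ℂ {A | ∃ Y : 𝒳 → Matrix (Fin d) (Fin d) ℂ, (∀ a i j, i < j → Y a i j = 0) ∧
    A = tensorFam (fun k => Y (x k))}

theorem lowSpan_finrank {𝒳 : Type*} [Fintype 𝒳] [DecidableEq 𝒳] (x : Fin n → 𝒳) :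
    Module.finrank ℂ (lowSpan d x) ≤ ∏ a, Nat.multichoose (Fintype.card (LowP d)) (occ x a) := by
  classical
  let S : Finset (𝒳 → LowP d → ℕ) :=
    Fintype.piFinset fun a => Finset.piAntidiag (Finset.univ : Finset (LowP d)) (occ x a)
  have hS : S.card = ∏ a, Nat.multichoose (Fintype.card (LowP d)) (occ x a) := by
    rw [Fintype.card_piFinset]
    exact Finset.prod_congr rfl fun a _ => card_piAntidiag_univ _
  let cnt : (Fin n → LowP d) → 𝒳 → LowP d → ℕ := fun q a p =>
    (Finset.univ.filter fun k => x k = a ∧ q k = p).card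
  have hcnt : ∀ q, cnt q ∈ S := by
    intro q
    rw [Fintype.mem_piFinset]
    intro a
    rw [Finset.mem_piAntidiag]
    refine ⟨?_, fun _ _ => Finset.mem_univ _⟩
    simp only [cnt, occ]
    rw [Finset.card_eq_sum_card_fiberwise (f := q) (t := Finset.univ) (fun _ _ => Finset.mem_univ _)]
    simp only [Finset.filter_filter]
  let E : (𝒳 → LowP d → ℕ) → Matrix (Fin n → Fin d) (Fin n → Fin d) ℂ := fun m => Matrix.of fun i j =>
    if h : ∀ k, j k ≤ i k then (if cnt (fun k => ⟨(i k, j k), h k⟩) = m then 1 else 0) else 0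
  have hle : lowSpan d x ≤ Submodule.span ℂ (S.image E : Set (Matrix (Fin n → Fin d) (Fin n → Fin d) ℂ)) := by
    refine Submodule.span_le.2 ?_
    rintro _ ⟨Y, hY, rfl⟩
    have : tensorFam (fun k => Y (x k)) = ∑ m ∈ S, (∏ a, ∏ p : LowP d, Y a p.1.1 p.1.2 ^ m a p) • E m := by
      ext i j
      simp only [Matrix.sum_apply, Matrix.smul_apply, smul_eq_mul, E, tensorFam, Matrix.of_apply]
      by_cases h : ∀ k, j k ≤ i k
      · simp only [dif_pos h, mul_ite, mul_one, mul_zero]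
        rw [Finset.sum_ite_eq S, if_pos (hcnt _)]
        simp only [cnt]
        rw [← Finset.prod_product', Finset.univ_product_univ,
          ← Finset.prod_fiberwise_of_maps_to (s := (Finset.univ : Finset (Fin n)))
          (t := (Finset.univ : Finset (𝒳 × LowP d)))
          (g := fun k => (x k, (⟨(i k, j k), h k⟩ : LowP d))) (fun _ _ => Finset.mem_univ _)]
        refine Finset.prod_congr rfl fun ap _ => ?_
        rw [← Finset.prod_const]
        refine Finset.prod_congr ?_ ?_
        · ext k
          simp [Prod.ext_iff]
        · intro k hk
          simp only [Finset.mem_filter, Finset.mem_univ, true_and] at hk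
          obtain ⟨h1, h2⟩ := hk
          rw [h1, ← h2]
      · simp only [dif_neg h, mul_zero, Finset.sum_const_zero]
        push Not at h
        obtain ⟨k, hk⟩ := h
        exact Finset.prod_eq_zero (Finset.mem_univ k) (hY _ _ _ hk)
    rw [this]
    refine Submodule.sum_mem _ fun m hm => Submodule.smul_mem _ _ (Submodule.subset_span ?_)
    exact Finset.mem_coe.2 (Finset.mem_image_of_mem E hm)
  rw [← hS]
  calc _ ≤ _ := Submodule.finrank_mono hle
    _ ≤ (S.image E).card := finrank_span_finset_le_card _
    _ ≤ S.card := Finset.card_image_le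

theorem star_dot_zero {m : Type*} [Fintype m] (w : m → ℂ) (h : star w ⬝ᵥ w = 0) : w = 0 := by
  rwa [dotProduct_star_self_eq_zero] at h

theorem card_minDec {𝒳 : Type*} [Fintype 𝒳] [DecidableEq 𝒳] (x : Fin n → 𝒳) {ι : Type*} [Fintype ι]
    {f : ι → Matrix (Fin n → Fin d) (Fin n → Fin d) ℂ} (hf : MinDec (Bx d x) f) :
    Fintype.card ι ≤ ∏ a, Nat.multichoose (Fintype.card (LowP d)) (occ x a) := by
  classical
  have hv : ∀ j, ∃ v : (Fin n → Fin d) → ℂ, v ≠ 0 ∧ (f j).mulVec v = v := by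
    intro j
    by_contra hcon
    push Not at hcon
    apply hf.ne j
    apply Matrix.toLin'.injective
    apply LinearMap.ext
    intro u
    rw [map_zero, LinearMap.zero_apply, Matrix.toLin'_apply]
    by_contra hu
    apply hcon _ hu
    rw [Matrix.mulVec_mulVec, hf.idem]
  choose v hv0 hv using hv
  choose b hb hbv hN using fun j => exists_hw x (v j) (hv0 j)
  let Φ : Matrix (Fin n → Fin d) (Fin n → Fin d) ℂ →ₗ[ℂ] (ι → ℂ) :=
    { toFun := fun c j => star (v j) ⬝ᵥ (f j * c).mulVec ((b j).mulVec (v j))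
      map_add' := by
        intro c c'
        funext j
        change _ ⬝ᵥ (f j * (c + c')).mulVec _ = _ ⬝ᵥ _ + _ ⬝ᵥ _
        rw [mul_add, Matrix.add_mulVec, dotProduct_add]
      map_smul' := by
        intro r c
        funext j
        simp [Matrix.smul_mulVec, dotProduct_smul] }
  have hΦ : ∀ c j, Φ c j = star (v j) ⬝ᵥ (f j * c).mulVec ((b j).mulVec (v j)) := fun _ _ => rfl
  have hbase : ∀ j, ∃ r : ℂ, r ≠ 0 ∧ Φ (f j * (b j).conjTranspose) = Pi.single j r := by
    intro j
    refine ⟨star ((b j).mulVec (v j)) ⬝ᵥ ((b j).mulVec (v j)), ?_, ?_⟩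
    · intro h
      exact hbv j (star_dot_zero _ h)
    · funext k
      rw [hΦ, ← mul_assoc]
      by_cases hk : k = j
      · subst hk
        rw [hf.idem, Pi.single_eq_same, ← Matrix.mulVec_mulVec, Matrix.dotProduct_mulVec]
        have : Matrix.vecMul (star (v k)) (f k) = star (v k) := by
          rw [← (hf.herm k).eq, ← Matrix.star_mulVec, hv]
        rw [this, Matrix.dotProduct_mulVec, ← Matrix.star_mulVec]
      · rw [hf.orth k j hk, Pi.single_eq_of_ne hk]
        simp
  have hmem : ∀ X : 𝒳 → Matrix (Fin d) (Fin d) ℂ,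
      tensorFam (fun k => X (x k)) ∈ ((lowSpan d x).map Φ).comap Φ := by
    apply posDef_density
    intro X hX
    choose Y N h1 h2 h3 using fun a => lu_posDef (hX a)
    refine ⟨tensorFam (fun k => Y (x k)), Submodule.subset_span ⟨Y, h2, rfl⟩, ?_⟩
    funext j
    have : tensorFam (fun k => X (x k)) = tensorFam (fun k => Y (x k)) * tensorFam (fun k => N (x k)) := by
      rw [tensorFam_mul]
      congr 1
      funext k
      exact h1 _
    rw [hΦ, hΦ, this, ← mul_assoc, ← Matrix.mulVec_mulVec _ (f j * _) (tensorFam _), hN j N h3]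
  have htop : (lowSpan d x).map Φ = ⊤ := by
    rw [eq_top_iff]
    intro y _
    have : y = ∑ j, y j • (Pi.single j (1:ℂ) : ι → ℂ) := by
      funext k
      simp [Finset.sum_apply, Pi.single_apply]
    rw [this]
    refine Submodule.sum_mem _ fun j _ => Submodule.smul_mem _ _ ?_
    obtain ⟨r, hr, hr2⟩ := hbase j
    have h1 : f j * (b j).conjTranspose ∈ Bx d x :=
      (Bx d x).mul_mem (hf.mem j) (Bx_conj x _ (hb j))
    have h2 : f j * (b j).conjTranspose ∈ ((lowSpan d x).map Φ).comap Φ := by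
      rw [mem_Bx] at h1
      refine Submodule.span_le.2 ?_ h1
      rintro _ ⟨X, rfl⟩
      exact hmem X
    have h3 : Φ (f j * (b j).conjTranspose) ∈ (lowSpan d x).map Φ := h2
    rw [hr2] at h3
    have h4 := Submodule.smul_mem _ r⁻¹ h3
    rwa [← Pi.single_smul, smul_eq_mul, inv_mul_cancel₀ hr] at h4
  have := Submodule.finrank_map_le Φ (lowSpan d x)
  rw [htop, finrank_top, Module.finrank_fintype_fun_eq_card] at this
  exact this.trans (lowSpan_finrank x)

end Part3

section Part4

variable {n d : ℕ}

theorem sum_zero_of_neg {α : Type*} [Fintype α] (e : α ≃ α) (F : α → ℂ) (h : ∀ a, F (e a) = - F a) :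
    ∑ a, F a = 0 := by
  have h1 := Equiv.sum_comp e F
  rw [Finset.sum_congr rfl (fun a _ => h a), Finset.sum_neg_distrib] at h1
  exact self_eq_neg.1 h1.symm

theorem sign_sum_zero (g : Fin n → Fin n) (hg : ¬ Function.Surjective g) :
    ∑ ε : Fin n → ℤˣ, ((((∏ k, ε k) * ∏ k, ε (g k) : ℤˣ) : ℤ) : ℂ) = 0 := by
  unfold Function.Surjective at hg
  push Not at hg
  obtain ⟨k0, hk0⟩ := hg
  refine sum_zero_of_neg (Equiv.mulRight (Pi.mulSingle k0 (-1) : Fin n → ℤˣ)) _ ?_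
  intro ε
  have e1 : ∏ k, (Equiv.mulRight (Pi.mulSingle k0 (-1) : Fin n → ℤˣ)) ε k = (∏ k, ε k) * (-1) := by
    simp only [Equiv.coe_mulRight, Pi.mul_apply, Finset.prod_mul_distrib]
    congr 1
    rw [Finset.prod_eq_single k0 (f := fun k => (Pi.mulSingle k0 (-1) : Fin n → ℤˣ) k)]
    · simp only [Pi.mulSingle_eq_same]
    · intro b _ hb
      simp only [Pi.mulSingle_eq_of_ne hb]
    · exact fun h => absurd (Finset.mem_univ _) h
  have e2 : ∀ k, (Equiv.mulRight (Pi.mulSingle k0 (-1) : Fin n → ℤˣ)) ε (g k) = ε (g k) := by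
    intro k
    simp only [Equiv.coe_mulRight, Pi.mul_apply, Pi.mulSingle_eq_of_ne (hk0 k), mul_one]
  simp only [e1, e2]
  generalize (∏ k, ε k) = u
  generalize (∏ k, ε (g k)) = w
  rw [mul_neg_one, neg_mul, Units.val_neg, Int.cast_neg]

theorem sign_sum_perm (g : Equiv.Perm (Fin n)) :
    ∑ ε : Fin n → ℤˣ, ((((∏ k, ε k) * ∏ k, ε (g k) : ℤˣ) : ℤ) : ℂ) = 2 ^ n := by
  have : ∀ ε : Fin n → ℤˣ, ((((∏ k, ε k) * ∏ k, ε (g k) : ℤˣ) : ℤ) : ℂ) = 1 := by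
    intro ε
    rw [Equiv.prod_comp g ε, Int.units_mul_self]
    simp
  rw [Finset.sum_congr rfl fun ε _ => this ε]
  simp

theorem sum_perm_mem (M : Fin n → Matrix (Fin d) (Fin d) ℂ) :
    ∑ π : Equiv.Perm (Fin n), tensorFam (fun k => M (π k)) ∈ Bx d (fun _ : Fin n => ()) := by
  classical
  have key : ∑ ε : Fin n → ℤˣ, (((∏ k, ε k : ℤˣ) : ℤ) : ℂ) •
      tensorFam (fun _ : Fin n => ∑ s, (((ε s : ℤˣ) : ℤ) : ℂ) • M s) =
      (2 : ℂ) ^ n • ∑ π : Equiv.Perm (Fin n), tensorFam (fun k => M (π k)) := by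
    simp only [tensorFam_sum, Finset.smul_sum, smul_smul]
    rw [Finset.sum_comm]
    have e : ∀ g : Fin n → Fin n, ∑ ε : Fin n → ℤˣ, ((((∏ k, ε k : ℤˣ) : ℤ) : ℂ) *
        ∏ k, (((ε (g k) : ℤˣ) : ℤ) : ℂ)) • tensorFam (fun k => M (g k)) =
        (∑ ε : Fin n → ℤˣ, ((((∏ k, ε k) * ∏ k, ε (g k) : ℤˣ) : ℤ) : ℂ)) • tensorFam (fun k => M (g k)) := by
      intro g
      rw [Finset.sum_smul]
      refine Finset.sum_congr rfl fun ε _ => ?_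
      congr 1
      push_cast
      rfl
    simp only [e]
    symm
    refine Finset.sum_of_injOn (fun π : Equiv.Perm (Fin n) => (π : Fin n → Fin n)) ?_ ?_ ?_ ?_
    · intro a _ b _ h
      exact DFunLike.coe_injective h
    · intro a _
      simp
    · intro g _ hg
      rw [sign_sum_zero g, zero_smul]
      intro hs
      apply hg
      have hb : Function.Bijective g := Finite.surjective_iff_bijective.1 hs
      exact ⟨Equiv.ofBijective g hb, by simp, rfl⟩
    · intro π _
      rw [sign_sum_perm π]
  have h2 : (2 : ℂ) ^ n • ∑ π : Equiv.Perm (Fin n), tensorFam (fun k => M (π k)) ∈ Bx d (fun _ : Fin n => ()) := by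
    rw [← key]
    refine Subalgebra.sum_mem _ fun ε _ => Subalgebra.smul_mem _ ?_ _
    exact tensor_mem_Bx (fun _ : Fin n => ()) fun _ => ∑ s, (((ε s : ℤˣ) : ℤ) : ℂ) • M s
  have := Subalgebra.smul_mem _ h2 ((2 : ℂ) ^ n)⁻¹
  rwa [smul_smul, inv_mul_cancel₀ (by positivity), one_smul] at this

theorem tensorFam_submatrix {κ δ : Type*} [Fintype κ] (M : κ → Matrix δ δ ℂ) (π : Equiv.Perm κ) :
    (tensorFam M).submatrix (fun i => i ∘ π) (fun i => i ∘ π) = tensorFam (fun k => M (π.symm k)) := by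
  ext i j
  simp only [tensorFam, Matrix.submatrix_apply, Matrix.of_apply, Function.comp]
  exact Fintype.prod_equiv π _ _ (fun k => by simp)

theorem twirl_mem (σ : Matrix (Fin n → Fin d) (Fin n → Fin d) ℂ) :
    ∑ π : Equiv.Perm (Fin n), σ.submatrix (fun i => i ∘ π) (fun i => i ∘ π) ∈ Bx d (fun _ : Fin n => ()) := by
  classical
  have hs : ∀ i j : Fin n → Fin d, Matrix.single i j (σ i j) =
      σ i j • tensorFam (fun k => Matrix.single (i k) (j k) (1:ℂ)) := by
    intro i j
    ext a b
    simp only [tensorFam, Matrix.smul_apply, Matrix.of_apply, Matrix.single_apply, smul_eq_mul]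
    rw [Finset.prod_ite_zero]
    simp [funext_iff, forall_and]
  have h1 : σ = ∑ i : Fin n → Fin d, ∑ j : Fin n → Fin d,
      σ i j • tensorFam (fun k => Matrix.single (i k) (j k) (1:ℂ)) := by
    conv_lhs => rw [Matrix.matrix_eq_sum_single σ]
    simp only [hs]
  have h2 : ∀ π : Equiv.Perm (Fin n), σ.submatrix (fun i => i ∘ π) (fun i => i ∘ π) =
      ∑ i : Fin n → Fin d, ∑ j : Fin n → Fin d,
      σ i j • tensorFam (fun k => Matrix.single (i (π.symm k)) (j (π.symm k)) (1:ℂ)) := by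
    intro π
    conv_lhs => rw [h1]
    ext a b
    simp only [Matrix.submatrix_apply, Matrix.sum_apply, Matrix.smul_apply]
    refine Finset.sum_congr rfl fun i _ => Finset.sum_congr rfl fun j _ => ?_
    congr 1
    have := tensorFam_submatrix (fun k => Matrix.single (i k) (j k) (1:ℂ)) π
    exact congrFun (congrFun this a) b
  simp only [h2]
  rw [Finset.sum_comm]
  refine Subalgebra.sum_mem _ fun i _ => ?_
  rw [Finset.sum_comm]
  refine Subalgebra.sum_mem _ fun j _ => ?_
  rw [← Finset.smul_sum]
  refine Subalgebra.smul_mem _ ?_ _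
  have := sum_perm_mem (fun k => Matrix.single (i k) (j k) (1:ℂ))
  rwa [← Equiv.sum_comp (Equiv.inv (Equiv.Perm (Fin n)))] at this

end Part4

section Part5

open Nat in
theorem pow_fact_le (m j : ℕ) : m ^ j * m ! ≤ m ^ m * j ! := by
  rcases le_total j m with h | h
  · have h1 := Nat.factorial_mul_descFactorial (n := m) (k := m - j) (by omega)
    rw [Nat.sub_sub_self h] at h1
    have h2 := Nat.descFactorial_le_pow m (m - j)
    calc m ^ j * m ! = m ^ j * (j ! * m.descFactorial (m - j)) := by rw [h1]
      _ ≤ m ^ j * (j ! * m ^ (m - j)) := by gcongr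
      _ = (m ^ j * m ^ (m - j)) * j ! := by ring
      _ = m ^ m * j ! := by rw [← pow_add, Nat.add_sub_cancel' h]
  · have h1 := Nat.factorial_mul_pow_sub_le_factorial h
    calc m ^ j * m ! = m ^ m * (m ! * m ^ (j - m)) := by
          conv_lhs => rw [← Nat.add_sub_cancel' h, pow_add]
          ring
      _ ≤ m ^ m * j ! := by gcongr

theorem multichoose_le_pow (r m : ℕ) : Nat.multichoose (r + 1) m ≤ (m + 1) ^ r := by
  induction r generalizing m with
  | zero => simp
  | succ r ih =>
    induction m with
    | zero => simp
    | succ m ihm =>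
      rw [Nat.multichoose_succ_succ]
      have h1 := ih (m + 1)
      have h2 : (m + 1) ^ r ≤ (m + 1 + 1) ^ r := Nat.pow_le_pow_left (by omega) r
      calc _ ≤ (m + 1 + 1) ^ r + (m + 1) ^ (r + 1) := add_le_add h1 ihm
        _ = (m + 1 + 1) ^ r + (m + 1) * (m + 1) ^ r := by ring
        _ ≤ (m + 1 + 1) ^ r + (m + 1) * (m + 1 + 1) ^ r := by gcongr
        _ = _ := by ring

open Nat in
theorem type_ineq {S : Type*} [Fintype S] [DecidableEq S] [Nonempty S] (c : S → ℕ) (n : ℕ) (hc : ∑ s, c s = n) :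
    n ^ n * ∏ s, (c s)! ≤ (n + 1) ^ (Fintype.card S - 1) * (n ! * ∏ s, c s ^ c s) := by
  have h := Finset.sum_pow_eq_sum_piAntidiag Finset.univ c n
  rw [hc] at h
  rw [h, Finset.sum_mul]
  have hle : ∀ k ∈ Finset.piAntidiag Finset.univ n,
      ((Nat.multinomial Finset.univ k : ℕ) * ∏ s, c s ^ k s) * ∏ s, (c s)! ≤ n ! * ∏ s, c s ^ c s := by
    intro k hk
    rw [Finset.mem_piAntidiag] at hk
    have h1 := Nat.multinomial_spec Finset.univ k
    rw [hk.1] at h1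
    rw [← h1, mul_assoc, ← Finset.prod_mul_distrib]
    calc _ ≤ Nat.multinomial Finset.univ k * ∏ s, (c s ^ c s * (k s)!) := by
            exact Nat.mul_le_mul_left _ (Finset.prod_le_prod' fun s _ => pow_fact_le _ _)
      _ = _ := by rw [Finset.prod_mul_distrib]; ring
  refine (Finset.sum_le_card_nsmul _ _ _ hle).trans ?_
  rw [card_piAntidiag_univ, smul_eq_mul]
  gcongr
  obtain ⟨r, hr⟩ : ∃ r, Fintype.card S = r + 1 := ⟨Fintype.card S - 1, by have := Fintype.card_pos (α := S); omega⟩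
  rw [hr]
  exact multichoose_le_pow r n

open Nat in
theorem perm_count {n : ℕ} {S : Type*} [Fintype S] [DecidableEq S] (s s' : Fin n → S) :
    (Finset.univ.filter fun π : Equiv.Perm (Fin n) => s ∘ π = s').card ≤ ∏ a, (occ s a)! := by
  by_cases h : ∃ π0 : Equiv.Perm (Fin n), s ∘ π0 = s'
  · obtain ⟨π0, rfl⟩ := h
    have h1 := DomMulAct.stabilizer_card s
    rw [Fintype.card_subtype] at h1
    have h2 : ∏ a, (Fintype.card {k // s k = a})! = ∏ a, (occ s a)! := by
      refine Finset.prod_congr rfl fun a _ => ?_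
      rw [Fintype.card_subtype]
      rfl
    rw [← h2, ← h1]
    refine Finset.card_le_card_of_injOn (fun π => π * π0⁻¹) ?_ ?_
    · intro π hπ
      simp only [Finset.coe_filter, Finset.mem_univ, true_and, Set.mem_setOf_eq] at hπ ⊢
      funext k
      have := congrFun hπ (π0⁻¹ k)
      simpa using this
    · intro a _ b _ hab
      exact mul_right_cancel hab
  · push Not at h
    rw [Finset.filter_false_of_mem (fun π _ => h π)]
    simp

theorem prod_occ {n : ℕ} {S : Type*} [Fintype S] [DecidableEq S] (s : Fin n → S) (Q : S → ℝ) :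
    ∏ k, Q (s k) = ∏ a, Q a ^ occ s a := by
  rw [← Finset.prod_fiberwise_of_maps_to (s := (Finset.univ : Finset (Fin n)))
          (t := (Finset.univ : Finset S)) (g := s) (fun _ _ => Finset.mem_univ _)]
  refine Finset.prod_congr rfl fun a _ => ?_
  rw [occ, ← Finset.prod_const]
  refine Finset.prod_congr rfl fun k hk => ?_
  rw [(Finset.mem_filter.1 hk).2]

theorem sum_occ {n : ℕ} {S : Type*} [Fintype S] [DecidableEq S] (s : Fin n → S) : ∑ a, occ s a = n := by
  have := Finset.card_eq_sum_card_fiberwise (s := (Finset.univ : Finset (Fin n))) (f := s)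
    (t := Finset.univ) (fun _ _ => Finset.mem_univ _)
  rw [Finset.card_univ, Fintype.card_fin] at this
  exact this.symm

open Nat in
theorem type_avg {n : ℕ} (hn : 1 ≤ n) {S : Type*} [Fintype S] [DecidableEq S] [Nonempty S] (s : Fin n → S)
    (F : (Fin n → S) → ℝ) (hF : ∀ s', 0 ≤ F s') :
    ∑ π : Equiv.Perm (Fin n), F (s ∘ π) ≤
      (n ! : ℝ) * ((n : ℝ) + 1) ^ (Fintype.card S - 1) *
        ∑ s' : Fin n → S, (∏ k, ((occ s (s' k) : ℝ) / n)) * F s' := by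
  have hn0 : (0 : ℝ) < n := by exact_mod_cast hn
  have h1 : ∑ π : Equiv.Perm (Fin n), F (s ∘ π) =
      ∑ s' : Fin n → S, ((Finset.univ.filter fun π : Equiv.Perm (Fin n) => s ∘ π = s').card : ℝ) * F s' := by
    rw [← Finset.sum_fiberwise_of_maps_to (s := (Finset.univ : Finset (Equiv.Perm (Fin n))))
      (t := (Finset.univ : Finset (Fin n → S))) (g := fun π => s ∘ π) (fun _ _ => Finset.mem_univ _)]
    refine Finset.sum_congr rfl fun s' _ => ?_
    rw [← nsmul_eq_mul, ← Finset.sum_const]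
    refine Finset.sum_congr rfl fun π hπ => ?_
    rw [(Finset.mem_filter.1 hπ).2]
  rw [h1, Finset.mul_sum]
  refine Finset.sum_le_sum fun s' _ => ?_
  rw [← mul_assoc]
  refine mul_le_mul_of_nonneg_right ?_ (hF s')
  by_cases h : ∃ π0 : Equiv.Perm (Fin n), s ∘ π0 = s'
  · have h2 : ((Finset.univ.filter fun π : Equiv.Perm (Fin n) => s ∘ π = s').card : ℝ) ≤ ∏ a, ((occ s a)! : ℝ) := by
      exact_mod_cast perm_count s s'
    refine h2.trans ?_
    obtain ⟨π0, rfl⟩ := h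
    have h3 : ∏ k, ((occ s ((s ∘ π0) k) : ℝ) / n) = ∏ a, ((occ s a : ℝ) / n) ^ occ s a := by
      rw [← prod_occ s (fun a => (occ s a : ℝ) / n)]
      exact Equiv.prod_comp π0 (fun k => (occ s (s k) : ℝ) / n)
    rw [h3]
    simp only [div_pow]
    rw [Finset.prod_div_distrib, Finset.prod_pow_eq_pow_sum, sum_occ]
    have h4 := type_ineq (occ s) n (sum_occ s)
    have h5 : (n : ℝ) ^ n * ∏ a, ((occ s a)! : ℝ) ≤ ((n : ℝ) + 1) ^ (Fintype.card S - 1) * ((n ! : ℝ) * ∏ a, (occ s a : ℝ) ^ occ s a) := by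
      exact_mod_cast h4
    rw [mul_div_assoc', le_div_iff₀ (by positivity)]
    linarith
  · push Not at h
    rw [Finset.filter_false_of_mem (fun π _ => h π)]
    simp only [Finset.card_empty, Nat.cast_zero]
    positivity

theorem exists_perm_of_count {α : Type*} [Fintype α] [DecidableEq α] (f g : α → ℕ)
    (h : Multiset.map f Finset.univ.val = Multiset.map g Finset.univ.val) :
    ∃ π : Equiv.Perm α, f = g ∘ π := by
  have hc : ∀ v, Fintype.card {i // f i = v} = Fintype.card {i // g i = v} := by
    intro v
    have := congrArg (Multiset.count v) h
    rw [Multiset.count_map, Multiset.count_map] at this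
    rw [Fintype.card_subtype, Fintype.card_subtype, Finset.card_def, Finset.card_def]
    simpa [Finset.filter_val, eq_comm] using this
  let e : ∀ v, {i // f i = v} ≃ {i // g i = v} := fun v => Fintype.equivOfCardEq (hc v)
  refine ⟨((Equiv.sigmaFiberEquiv f).symm.trans (Equiv.sigmaCongrRight e)).trans (Equiv.sigmaFiberEquiv g), ?_⟩
  funext i
  exact ((e (f i)) ⟨i, rfl⟩).2.symm

theorem filter_inj {a b : Multiset ℕ} (hc : a.card = b.card) (h : a.filter (· ≠ 0) = b.filter (· ≠ 0)) : a = b := by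
  have ha := Multiset.filter_add_not (· ≠ 0) a
  have hb := Multiset.filter_add_not (· ≠ 0) b
  have za : a.filter (fun x => ¬ (x ≠ 0)) = Multiset.replicate (a.filter (fun x => ¬ (x ≠ 0))).card 0 :=
    Multiset.eq_replicate_card.2 fun x hx => by simpa using (Multiset.mem_filter.1 hx).2
  have zb : b.filter (fun x => ¬ (x ≠ 0)) = Multiset.replicate (b.filter (fun x => ¬ (x ≠ 0))).card 0 :=
    Multiset.eq_replicate_card.2 fun x hx => by simpa using (Multiset.mem_filter.1 hx).2
  have ca := congrArg Multiset.card ha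
  have cb := congrArg Multiset.card hb
  rw [Multiset.card_add] at ca cb
  rw [h] at ca
  have : (a.filter (fun x => ¬ (x ≠ 0))).card = (b.filter (fun x => ¬ (x ≠ 0))).card := by omega
  rw [← ha, ← hb, za, zb, this, h]

open Nat in
theorem multichoose_le_part (n d : ℕ) : Nat.multichoose d n ≤ d ! * numPartLe n d := by
  classical
  have h0 : (Finset.piAntidiag (Finset.univ : Finset (Fin d)) n).card = Nat.multichoose d n := by
    rw [card_piAntidiag_univ, Fintype.card_fin]
  rw [← h0]
  let s := Finset.piAntidiag (Finset.univ : Finset (Fin d)) n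
  let par : {f // f ∈ s} → {p : Nat.Partition n // p.parts.card ≤ d} := fun f =>
    ⟨Nat.Partition.ofSums n (Multiset.map f.1 Finset.univ.val) (Finset.mem_piAntidiag.1 f.2).1, by
      refine (Multiset.card_le_card (Multiset.filter_le (· ≠ 0) (Multiset.map f.1 Finset.univ.val))).trans ?_
      simp⟩
  have h1 : s.card = (Finset.univ : Finset {f // f ∈ s}).card := by simp
  have h2 := Finset.card_le_mul_card_image (f := par) (Finset.univ : Finset {f // f ∈ s}) (d !) ?_
  · change s.card ≤ _
    rw [h1]
    refine h2.trans ?_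
    gcongr
    unfold numPartLe
    rw [Nat.card_eq_fintype_card]
    exact Finset.card_le_univ _
  · intro p hp
    obtain ⟨f0, _, rfl⟩ := Finset.mem_image.1 hp
    have : Fintype.card (Equiv.Perm (Fin d)) = d ! := by rw [Fintype.card_perm, Fintype.card_fin]
    rw [← this, ← Finset.card_univ]
    have hex : ∀ f : {f // f ∈ s}, par f = par f0 → ∃ π : Equiv.Perm (Fin d), f.1 = f0.1 ∘ π := by
      intro f hf
      apply exists_perm_of_count
      apply filter_inj
      · simp
      · exact congrArg (fun q => q.1.parts) hf
    refine Finset.card_le_card_of_injOn (fun f => if h : par f = par f0 then (hex f h).choose else 1)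
      (fun _ _ => Finset.mem_coe.2 (Finset.mem_univ _)) ?_
    intro f hf g hg hfg
    have hf' := (Finset.mem_filter.1 hf).2
    have hg' := (Finset.mem_filter.1 hg).2
    simp only [dif_pos hf', dif_pos hg'] at hfg
    apply Subtype.ext
    rw [(hex f hf').choose_spec, (hex g hg').choose_spec, hfg]

theorem multichoose_step (r n : ℕ) (hr : 2 ≤ r) (hn : 2 ≤ n) : Nat.multichoose (r + 1) n ≤ n * Nat.multichoose r n := by
  have h : Nat.multichoose r n * (n + r) = Nat.multichoose (r + 1) n * r := by
    rw [Nat.multichoose_eq, Nat.multichoose_eq]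
    have := Nat.choose_mul_succ_eq (r + n - 1) n
    have e1 : r + n - 1 + 1 = r + n := by omega
    have e2 : r + n - n = r := by omega
    have e3 : r + 1 + n - 1 = r + n := by omega
    rw [e1, e2] at this
    rw [e3, add_comm n r]
    exact this
  have h2 : n + r ≤ n * r := by nlinarith
  have : Nat.multichoose (r + 1) n * r ≤ (n * Nat.multichoose r n) * r := by
    rw [← h]
    calc _ ≤ Nat.multichoose r n * (n * r) := by gcongr
      _ = _ := by ring
  exact Nat.le_of_mul_le_mul_right this (by omega)

theorem multichoose_steps (d b n : ℕ) (hd : 2 ≤ d) (hn : 2 ≤ n) :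
    Nat.multichoose (d + b) n ≤ n ^ b * Nat.multichoose d n := by
  induction b with
  | zero => simp
  | succ b ih =>
    calc _ ≤ n * Nat.multichoose (d + b) n := multichoose_step (d + b) n (by omega) hn
      _ ≤ n * (n ^ b * Nat.multichoose d n) := by gcongr
      _ = _ := by ring

theorem card_lowP (d : ℕ) : Fintype.card (LowP d) = d + d * (d - 1) / 2 := by
  have h1 : Fintype.card (LowP d) = ∑ i : Fin d, ((i : ℕ) + 1) := by
    rw [Fintype.card_congr (Equiv.subtypeProdEquivSigmaSubtype (fun i j : Fin d => j ≤ i)), Fintype.card_sigma]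
    refine Finset.sum_congr rfl fun i _ => ?_
    rw [Fintype.card_subtype]
    have : (Finset.univ.filter fun j : Fin d => j ≤ i) = Finset.Iic i := by ext; simp
    rw [this, Fin.card_Iic]
  rw [h1, Finset.sum_add_distrib, Finset.sum_const, Finset.card_univ, Fintype.card_fin, smul_eq_mul, mul_one,
    add_comm, Fin.sum_univ_eq_sum_range (fun i => i), Finset.sum_range_id]

open Nat in
theorem fact_four (d : ℕ) : (d + 1)! * 4 ^ (d + (d + 1) * d / 2) ≤ 9 ^ (d + (d + 1) * d / 2) := by
  induction d with
  | zero => simp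
  | succ d ih =>
    have e : (d + 1) + (d + 1 + 1) * (d + 1) / 2 = (d + (d + 1) * d / 2) + (d + 2) := by
      have : (d + 1 + 1) * (d + 1) = (d + 1) * d + (d + 1) * 2 := by ring
      rw [this, Nat.add_mul_div_right _ _ (by norm_num)]
      omega
    rw [e, pow_add 4 (d + (d + 1) * d / 2), pow_add 9 (d + (d + 1) * d / 2), Nat.factorial_succ]
    have h1 : d + 2 ≤ 2 ^ (d + 2) := (Nat.lt_two_pow_self).le
    calc _ = ((d + 1)! * 4 ^ (d + (d + 1) * d / 2)) * ((d + 2) * 4 ^ (d + 2)) := by ring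
      _ ≤ 9 ^ (d + (d + 1) * d / 2) * (2 ^ (d + 2) * 4 ^ (d + 2)) := by gcongr
      _ = 9 ^ (d + (d + 1) * d / 2) * 8 ^ (d + 2) := by rw [← mul_pow]; norm_num
      _ ≤ _ := Nat.mul_le_mul_left _ (Nat.pow_le_pow_left (show 8 ≤ 9 by norm_num) (d + 2))

theorem numPart_pos (n d : ℕ) (hd : 1 ≤ d) : 1 ≤ numPartLe n d := by
  have h := multichoose_le_part n d
  have h1 : 0 < Nat.multichoose d n := by
    rw [Nat.multichoose_eq]
    exact Nat.choose_pos (by omega)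
  by_contra hc
  have : numPartLe n d = 0 := by omega
  rw [this] at h
  omega

open Nat in
theorem scalar_ineq {𝒳 : Type*} [Fintype 𝒳] [DecidableEq 𝒳] (hX : 2 ≤ Fintype.card 𝒳) {n d : ℕ}
    (hn : 1 ≤ n) (hd : 1 ≤ d) (x : Fin n → 𝒳) :
    Nat.multichoose (Fintype.card (LowP d)) n * ∏ a, Nat.multichoose (Fintype.card (LowP d)) (occ x a) ≤
      n ^ (d * (d - 1) / 2) * numPartLe n d * (n + 1) ^ (Fintype.card 𝒳 * (d - 1 + d * (d - 1) / 2)) := by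
  set b := d * (d - 1) / 2 with hb
  set α := d - 1 + b with hα
  have hcard : Fintype.card (LowP d) = α + 1 := by rw [card_lowP]; omega
  have hocc : ∀ a, occ x a ≤ n := by
    intro a
    have := Finset.card_le_univ (Finset.univ.filter fun k => x k = a)
    simpa [occ] using this
  obtain ⟨x0, x1, hx01⟩ := Fintype.exists_pair_of_one_lt_card (show 1 < Fintype.card 𝒳 by omega)
  have hsum : occ x x0 + occ x x1 ≤ n := by
    have h1 : ∑ a ∈ ({x0, x1} : Finset 𝒳), occ x a ≤ ∑ a, occ x a :=
      Finset.sum_le_sum_of_subset (Finset.subset_univ _)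
    rwa [Finset.sum_pair hx01, sum_occ] at h1
  have hprod : ∏ a, Nat.multichoose (Fintype.card (LowP d)) (occ x a) ≤
      ((occ x x0 + 1) * (occ x x1 + 1)) ^ α * (n + 1) ^ ((Fintype.card 𝒳 - 2) * α) := by
    have h1 : ∏ a, Nat.multichoose (Fintype.card (LowP d)) (occ x a) ≤ ∏ a, (occ x a + 1) ^ α := by
      refine Finset.prod_le_prod' fun a _ => ?_
      rw [hcard]
      exact multichoose_le_pow _ _
    refine h1.trans ?_
    rw [Finset.prod_pow, ← Finset.prod_sdiff (Finset.subset_univ ({x0, x1} : Finset 𝒳)), Finset.prod_pair hx01,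
      pow_mul, ← mul_pow]
    refine Nat.pow_le_pow_left ?_ _
    rw [mul_comm]
    gcongr
    refine (Finset.prod_le_pow_card _ _ (n + 1) fun a _ => ?_).trans ?_
    · have := hocc a
      omega
    · rw [Finset.card_univ_diff, Finset.card_pair hx01]
  have hΛ := numPart_pos n d hd
  obtain ⟨q, hq⟩ : ∃ q, Fintype.card 𝒳 = q + 2 := ⟨Fintype.card 𝒳 - 2, by omega⟩
  rw [hq] at hprod ⊢
  have e0 : (n + 1) ^ ((q + 2) * α) = (n + 1) ^ (2 * α) * (n + 1) ^ (q * α) := by rw [← pow_add]; ring_nf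
  have e1 : q + 2 - 2 = q := rfl
  rw [e1] at hprod
  rw [e0]
  suffices hs : Nat.multichoose (Fintype.card (LowP d)) n * ((occ x x0 + 1) * (occ x x1 + 1)) ^ α ≤
      n ^ b * numPartLe n d * (n + 1) ^ (2 * α) by
    calc _ ≤ Nat.multichoose (Fintype.card (LowP d)) n *
          (((occ x x0 + 1) * (occ x x1 + 1)) ^ α * (n + 1) ^ (q * α)) := by gcongr
      _ = (Nat.multichoose (Fintype.card (LowP d)) n * ((occ x x0 + 1) * (occ x x1 + 1)) ^ α) * (n + 1) ^ (q * α) := by ring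
      _ ≤ (n ^ b * numPartLe n d * (n + 1) ^ (2 * α)) * (n + 1) ^ (q * α) := by gcongr
      _ = _ := by ring
  have hfour : 4 * ((occ x x0 + 1) * (occ x x1 + 1)) ≤ (n + 2) ^ 2 := by
    have h2 : 4 * ((occ x x0 + 1) * (occ x x1 + 1)) ≤ (occ x x0 + occ x x1 + 2) ^ 2 := by
      zify
      nlinarith [sq_nonneg ((occ x x0 : ℤ) - occ x x1)]
    exact h2.trans (Nat.pow_le_pow_left (by omega) 2)
  rcases Nat.lt_or_ge n 2 with hn2 | hn2
  · have hn1 : n = 1 := by omega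
    subst hn1
    have h2 : (occ x x0 + 1) * (occ x x1 + 1) ≤ 2 := by omega
    calc _ ≤ (1 + 1) ^ α * 2 ^ α := by
            gcongr
            rw [hcard]
            exact multichoose_le_pow _ _
      _ = 1 * 1 * (1 + 1) ^ (2 * α) := by rw [two_mul, pow_add]; ring
      _ ≤ _ := by
          gcongr
          simp
  rcases Nat.lt_or_ge d 2 with hd2 | hd2
  · have hd1 : d = 1 := by omega
    subst hd1
    have : b = 0 := by simp [hb]
    have h3 : α = 0 := by omega
    rw [hcard, h3, this]
    simpa using hΛ
  · have h1 : Nat.multichoose (Fintype.card (LowP d)) n ≤ n ^ b * (d ! * numPartLe n d) := by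
      rw [card_lowP]
      exact (multichoose_steps d b n hd2 hn2).trans (Nat.mul_le_mul_left _ (multichoose_le_part n d))
    have h2 : d ! * 4 ^ α ≤ 9 ^ α := by
      obtain ⟨e, rfl⟩ : ∃ e, d = e + 1 := ⟨d - 1, by omega⟩
      have := fact_four e
      simpa [hα, hb] using this
    have h3 : 9 * (n + 2) ^ 2 ≤ 16 * (n + 1) ^ 2 := by nlinarith
    have h4 : d ! * ((n + 2) ^ 2) ^ α ≤ 4 ^ α * (n + 1) ^ (2 * α) := by
      have : (d ! * ((n + 2) ^ 2) ^ α) * 9 ^ α ≤ (4 ^ α * (n + 1) ^ (2 * α)) * 9 ^ α := by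
        calc _ = d ! * (9 * (n + 2) ^ 2) ^ α := by rw [mul_pow]; ring
          _ ≤ d ! * (16 * (n + 1) ^ 2) ^ α := by gcongr
          _ = (d ! * 4 ^ α) * (4 ^ α * (n + 1) ^ (2 * α)) := by
            rw [mul_pow, pow_mul (n + 1), show 16 = 4 * 4 from rfl, mul_pow]; ring
          _ ≤ 9 ^ α * (4 ^ α * (n + 1) ^ (2 * α)) := by gcongr
          _ = _ := by ring
      exact Nat.le_of_mul_le_mul_right this (by positivity)
    have h5 : (Nat.multichoose (Fintype.card (LowP d)) n * ((occ x x0 + 1) * (occ x x1 + 1)) ^ α) * 4 ^ α ≤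
        (n ^ b * numPartLe n d * (n + 1) ^ (2 * α)) * 4 ^ α := by
      calc _ = Nat.multichoose (Fintype.card (LowP d)) n * (4 * ((occ x x0 + 1) * (occ x x1 + 1))) ^ α := by
              rw [mul_pow 4]; ring
        _ ≤ (n ^ b * (d ! * numPartLe n d)) * ((n + 2) ^ 2) ^ α := by gcongr
        _ = n ^ b * numPartLe n d * (d ! * ((n + 2) ^ 2) ^ α) := by ring
        _ ≤ n ^ b * numPartLe n d * (4 ^ α * (n + 1) ^ (2 * α)) := by gcongr
        _ = _ := by ring
    exact Nat.le_of_mul_le_mul_right h5 (by positivity)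

end Part5

section Part6
open Matrix

variable {m : Type*} [Fintype m] [DecidableEq m]

/-- Scalar power on the support. -/
def pw (r u : ℝ) : ℝ := if u ≤ 0 then 0 else u ^ r

theorem pw_nonneg (r u : ℝ) : 0 ≤ pw r u := by
  unfold pw
  split_ifs with h
  · exact le_rfl
  · exact Real.rpow_nonneg (le_of_lt (not_le.1 h)) r

theorem pw_pos {r u : ℝ} (h : 0 < u) : pw r u = u ^ r := by
  unfold pw
  rw [if_neg (not_le.2 h)]

theorem pw_eq {r u : ℝ} (hr : 0 < r) (hu : 0 ≤ u) : pw r u = u ^ r := by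
  rcases hu.eq_or_lt with h | h
  · rw [← h, Real.zero_rpow hr.ne']; simp [pw]
  · exact pw_pos h

theorem pw_prod {κ : Type*} (s : Finset κ) (r : ℝ) (u : κ → ℝ) (hu : ∀ k, 0 ≤ u k) :
    pw r (∏ k ∈ s, u k) = ∏ k ∈ s, pw r (u k) := by
  by_cases h : ∃ k ∈ s, u k = 0
  · obtain ⟨k, hk, h0⟩ := h
    rw [Finset.prod_eq_zero hk h0, Finset.prod_eq_zero hk (by rw [h0]; simp [pw])]
    simp [pw]
  · push Not at h
    have hp : ∀ k ∈ s, 0 < u k := fun k hk => lt_of_le_of_ne (hu k) (h k hk).symm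
    rw [pw_pos (Finset.prod_pos hp), ← Real.finsetProd_rpow s u (fun k _ => hu k)]
    exact Finset.prod_congr rfl fun k hk => (pw_pos (hp k hk)).symm

theorem mpow_dec {ι : Type*} [Fintype ι] {f : ι → Matrix m m ℂ} (hf : PDec f)
    (p : ι → ℝ) (r : ℝ) :
    mpow (∑ j, (p j : ℂ) • f j) r = ∑ j, (pw r (p j) : ℂ) • f j := matFun_dec hf p _

theorem PDec.psd {ι : Type*} [Fintype ι] {f : ι → Matrix m m ℂ} (hf : PDec f)
    (p : ι → ℝ) (hp : ∀ j, 0 ≤ p j) : (∑ j, (p j : ℂ) • f j).PosSemidef := by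
  refine Matrix.posSemidef_sum _ fun j _ => ?_
  exact (proj_isHerm_pos (hf.herm j) (hf.idem j)).smul (by exact_mod_cast hp j)

theorem mpow_spec {A : Matrix m m ℂ} (hA : A.IsHermitian) (r : ℝ) :
    mpow A r = ∑ i, (pw r (hA.eigenvalues i) : ℂ) • specProj hA i := matFun_spec hA _

theorem mpow_psd {A : Matrix m m ℂ} (hA : A.IsHermitian) (r : ℝ) : (mpow A r).PosSemidef := by
  rw [mpow_spec hA]
  exact (specProj_pdec hA).psd _ fun _ => pw_nonneg _ _

theorem mpow_trace {A : Matrix m m ℂ} (hA : A.IsHermitian) (r : ℝ) :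
    (mpow A r).trace = ((∑ i, pw r (hA.eigenvalues i) : ℝ) : ℂ) := by
  rw [mpow_spec hA, Matrix.trace_sum]
  push_cast
  refine Finset.sum_congr rfl fun i _ => ?_
  rw [Matrix.trace_smul, specProj_trace, smul_eq_mul, mul_one]

theorem PDec.tensor {κ δ ι : Type*} [Fintype κ] [DecidableEq κ] [Fintype δ] [DecidableEq δ] [Fintype ι]
    {f : κ → ι → Matrix δ δ ℂ} (hf : ∀ k, PDec (f k)) :
    PDec (fun i : κ → ι => tensorFam (fun k => f k (i k))) where
  herm i := by
    unfold Matrix.IsHermitian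
    rw [tensorFam_conj]
    congr 1
    ext1 k
    exact (hf k).herm _
  idem i := by
    rw [tensorFam_mul]
    congr 1
    ext1 k
    exact (hf k).idem _
  orth i j hij := by
    rw [tensorFam_mul]
    obtain ⟨k, hk⟩ := Function.ne_iff.1 hij
    ext a b
    simp only [tensorFam, Matrix.of_apply, Matrix.zero_apply]
    refine Finset.prod_eq_zero (Finset.mem_univ k) ?_
    rw [(hf k).orth _ _ hk, Matrix.zero_apply]
  sum := by
    have := tensorFam_sum (fun (_ : κ) (_ : ι) => (1 : ℂ)) f
    simp only [Finset.prod_const_one, one_smul] at this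
    rw [← this, ← tensorFam_one]
    congr 1
    ext1 k
    exact (hf k).sum

theorem mpow_tensor {κ δ : Type*} [Fintype κ] [DecidableEq κ] [Fintype δ] [DecidableEq δ]
    {A : κ → Matrix δ δ ℂ} (hA : ∀ k, (A k).PosSemidef) (r : ℝ) :
    mpow (tensorFam A) r = tensorFam (fun k => mpow (A k) r) := by
  have hp : PDec (fun i : κ → δ => tensorFam (fun k => specProj (hA k).1 (i k))) :=
    PDec.tensor fun k => specProj_pdec (hA k).1
  have h1 : tensorFam A = ∑ i : κ → δ, ((∏ k, (hA k).1.eigenvalues (i k) : ℝ) : ℂ) •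
      tensorFam (fun k => specProj (hA k).1 (i k)) := by
    have := tensorFam_sum (fun (k : κ) (i : δ) => ((hA k).1.eigenvalues i : ℂ)) (fun k => specProj (hA k).1)
    simp only [← spec_eq] at this
    push_cast
    exact this
  have h2 := tensorFam_sum (fun (k : κ) (i : δ) => (pw r ((hA k).1.eigenvalues i) : ℂ)) (fun k => specProj (hA k).1)
  simp only [← mpow_spec] at h2
  rw [h2, h1, mpow_dec hp]
  refine Finset.sum_congr rfl fun i _ => ?_
  rw [pw_prod _ _ _ fun k => (hA k).eigenvalues_nonneg _]
  push_cast
  rfl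

theorem holder_trace {ι : Type*} [Fintype ι] {e : ι → Matrix m m ℂ} (he : PDec e)
    (hv : ∀ i, 0 < (e i).trace.re) {M : Matrix m m ℂ} (hM : M.PosSemidef) {t : ℝ}
    (ht : t ∈ Set.Ioo (0 : ℝ) 1) :
    (mpow (tauOf e) t * M).trace.re ≤
      (Fintype.card ι : ℝ) ^ t * ((mpow M (1 / (1 - t))).trace.re) ^ (1 - t) := by
  obtain ⟨ht0, ht1⟩ := ht
  have ht2 : 0 < 1 - t := by linarith
  have hE := specProj_pdec hM.1
  set E := specProj hM.1 with hEdef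
  set g := hM.1.eigenvalues with hg
  have hg0 : ∀ a, 0 ≤ g a := hM.eigenvalues_nonneg
  let c : ι → m → ℝ := fun i a => (e i * E a).trace.re
  have hc0 : ∀ i a, 0 ≤ c i a := fun i a => by
    have := trace_mul_psd_nonneg (proj_isHerm_pos (he.herm i) (he.idem i)) (proj_isHerm_pos (hE.herm a) (hE.idem a))
    exact (Complex.le_def.1 this).1
  have hcv : ∀ i, ∑ a, c i a = (e i).trace.re := fun i => by
    simp only [c]
    rw [← Complex.re_sum, ← Matrix.trace_sum, ← Finset.mul_sum, hE.sum, mul_one]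
  have hc1 : ∀ a, ∑ i, c i a = 1 := fun a => by
    simp only [c]
    rw [← Complex.re_sum, ← Matrix.trace_sum, ← Finset.sum_mul, he.sum, one_mul, hEdef, specProj_trace,
      Complex.one_re]
  have hL : (mpow (tauOf e) t * M).trace.re =
      ∑ q : ι × m, (((e q.1).trace.re⁻¹ * c q.1 q.2) ^ t) * (g q.2 * (c q.1 q.2) ^ (1 - t)) := by
    have : (mpow (tauOf e) t * M) = ∑ i, ∑ a, ((((e i).trace.re⁻¹) ^ t * g a : ℝ) : ℂ) • (e i * E a) := by
      unfold tauOf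
      rw [mpow_dec he]
      conv_lhs => rw [spec_eq hM.1]
      rw [Finset.sum_mul_sum]
      refine Finset.sum_congr rfl fun i _ => Finset.sum_congr rfl fun a _ => ?_
      rw [pw_pos (inv_pos.2 (hv i)), Matrix.smul_mul, Matrix.mul_smul, smul_smul]
      push_cast
      rfl
    rw [this, Fintype.sum_prod_type, Matrix.trace_sum, Complex.re_sum]
    refine Finset.sum_congr rfl fun i _ => ?_
    rw [Matrix.trace_sum, Complex.re_sum]
    refine Finset.sum_congr rfl fun a _ => ?_
    rw [Matrix.trace_smul, smul_eq_mul, Complex.re_ofReal_mul, Real.mul_rpow (inv_pos.2 (hv i)).le (hc0 i a)]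
    have : c i a ^ t * c i a ^ (1 - t) = c i a := by
      rw [← Real.rpow_add_of_nonneg (hc0 i a) ht0.le ht2.le]; simp
    change _ * c i a = ((e i).trace.re⁻¹ ^ t * c i a ^ t) * (g a * c i a ^ (1 - t))
    rw [show ((e i).trace.re⁻¹ ^ t * c i a ^ t) * (g a * c i a ^ (1 - t)) =
      ((e i).trace.re⁻¹ ^ t * g a) * (c i a ^ t * c i a ^ (1 - t)) by ring, this]
  rw [hL]
  have hpq : (1 / t).HolderConjugate (1 / (1 - t)) := by
    rw [Real.holderConjugate_iff]
    constructor
    · rw [lt_div_iff₀ ht0]; linarith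
    · simp
  refine (Real.inner_le_Lp_mul_Lq_of_nonneg Finset.univ hpq
    (fun q _ => Real.rpow_nonneg (mul_nonneg (inv_pos.2 (hv _)).le (hc0 _ _)) _)
    (fun q _ => mul_nonneg (hg0 _) (Real.rpow_nonneg (hc0 _ _) _))).trans (le_of_eq ?_)
  rw [one_div_one_div, one_div_one_div]
  congr 2
  · rw [Fintype.sum_prod_type]
    rw [← Finset.card_univ, Finset.card_eq_sum_ones]
    push_cast
    refine Finset.sum_congr rfl fun i _ => ?_
    have : ∀ a, (((e i).trace.re⁻¹ * c i a) ^ t) ^ (1 / t) = (e i).trace.re⁻¹ * c i a := fun a => by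
      rw [← Real.rpow_mul (mul_nonneg (inv_pos.2 (hv _)).le (hc0 _ _)), mul_one_div_cancel ht0.ne', Real.rpow_one]
    simp only [this]
    rw [← Finset.mul_sum, hcv, inv_mul_cancel₀ (hv i).ne']
  · rw [Fintype.sum_prod_type_right, mpow_trace hM.1, Complex.ofReal_re]
    refine Finset.sum_congr rfl fun a _ => ?_
    have : ∀ i, (g a * c i a ^ (1 - t)) ^ (1 / (1 - t)) = g a ^ (1 / (1 - t)) * c i a := fun i => by
      rw [Real.mul_rpow (hg0 a) (Real.rpow_nonneg (hc0 _ _) _), ← Real.rpow_mul (hc0 _ _),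
        mul_one_div_cancel ht2.ne', Real.rpow_one]
    simp only [this]
    rw [← Finset.mul_sum, hc1, mul_one, pw_eq (one_div_pos.2 ht2) (hg0 a)]

theorem eig_le_trace {A : Matrix m m ℂ} (hA : A.PosSemidef) (i : m) : hA.1.eigenvalues i ≤ A.trace.re := by
  have : A.trace.re = ∑ i, hA.1.eigenvalues i := by
    rw [hA.1.trace_eq_sum_eigenvalues]; simp
  rw [this]
  exact Finset.single_le_sum (fun i _ => hA.eigenvalues_nonneg i) (Finset.mem_univ i)

theorem mpow_trace_le {A : Matrix m m ℂ} (hA : A.PosSemidef) {r : ℝ} (hr : 0 < r) {C : ℝ} (hC : A.trace.re ≤ C) :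
    (mpow A r).trace.re ≤ Fintype.card m * C ^ r := by
  rw [mpow_trace hA.1, Complex.ofReal_re]
  refine (Finset.sum_le_card_nsmul _ _ (C ^ r) fun i _ => ?_).trans (by simp)
  rw [pw_eq hr (hA.eigenvalues_nonneg i)]
  exact Real.rpow_le_rpow (hA.eigenvalues_nonneg i) ((eig_le_trace hA i).trans hC) hr.le

theorem mix_density {S : Type*} [Fintype S] {w : S → ℝ} (hw : ∀ s, 0 ≤ w s) (h1 : ∑ s, w s = 1)
    {A : S → Matrix m m ℂ} (hA : ∀ s, IsDensity (A s)) : IsDensity (∑ s, w s • A s) := by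
  constructor
  · exact Matrix.posSemidef_sum _ fun s _ => (hA s).1.smul (hw s)
  · rw [Matrix.trace_sum]
    simp only [Matrix.trace_smul, (hA _).2]
    rw [← Finset.sum_smul, h1, one_smul]

theorem psd_mix {X : Type*} [Fintype X] {P : X → ℝ} (hP : ∀ s, 0 ≤ P s)
    {A : X → Matrix m m ℂ} (hA : ∀ s, (A s).PosSemidef) : (∑ s, P s • A s).PosSemidef :=
  Matrix.posSemidef_sum _ fun s _ => (hA s).smul (hP s)

theorem bdd_renyi {𝒳 𝒮 : Type*} [Fintype 𝒳] [Fintype 𝒮] {d : ℕ}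
    (ρ : 𝒳 → 𝒮 → Matrix (Fin d) (Fin d) ℂ) (hρ : ∀ x s, IsDensity (ρ x s))
    (P : 𝒳 → ℝ) (hP : ∀ x, 0 ≤ P x) (hP1 : ∑ x, P x = 1) (t : ℝ) (ht : t ∈ Set.Ioo (0 : ℝ) 1) :
    BddBelow (Set.range fun Q : ProbVec 𝒮 => renyiI P (fun x => ∑ s, Q.1 s • ρ x s) t) := by
  obtain ⟨ht0, ht1⟩ := ht
  have ht2 : 0 < 1 - t := by linarith
  refine ⟨-((1 - t) / t) * Real.logb 2 ((d : ℝ) * (d : ℝ) ^ (1 / (1 - t)) + 1), ?_⟩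
  rintro _ ⟨Q, rfl⟩
  simp only [renyiI]
  rw [neg_mul, neg_mul, neg_le_neg_iff]
  refine mul_le_mul_of_nonneg_left ?_ (by positivity)
  have hρQ : ∀ x, IsDensity (∑ s, Q.1 s • ρ x s) := fun x => mix_density Q.2.1 Q.2.2 (hρ x)
  have hG := psd_mix hP fun x => mpow_psd (hρQ x).1.1 (1 - t)
  have hGt : (∑ x, P x • mpow (∑ s, Q.1 s • ρ x s) (1 - t)).trace.re ≤ d := by
    rw [Matrix.trace_sum, Complex.re_sum]
    calc _ ≤ ∑ x, P x * (d : ℝ) := by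
          refine Finset.sum_le_sum fun x _ => ?_
          rw [Matrix.trace_smul, Complex.smul_re, smul_eq_mul]
          refine mul_le_mul_of_nonneg_left ?_ (hP x)
          refine (mpow_trace_le (hρQ x).1 ht2 (C := 1) (by rw [(hρQ x).2]; simp)).trans (by simp)
      _ = _ := by rw [← Finset.sum_mul, hP1, one_mul]
  have hZ := mpow_trace_le hG (one_div_pos.2 ht2) hGt
  rw [Fintype.card_fin] at hZ
  have hZ0 : 0 ≤ (mpow (∑ x, P x • mpow (∑ s, Q.1 s • ρ x s) (1 - t)) (1 / (1 - t))).trace.re :=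
    (Complex.le_def.1 (mpow_psd hG.1 _).trace_nonneg).1
  rcases hZ0.eq_or_lt with h | h
  · rw [← h, Real.logb_zero]
    exact Real.logb_nonneg (by norm_num) (by have : (0:ℝ) ≤ (d : ℝ) * (d : ℝ) ^ (1 / (1 - t)) := by positivity
                                             linarith)
  · exact Real.logb_le_logb_of_le (by norm_num) h (by linarith)

end Part6

section Part7
open Matrix

variable {m : Type*} [Fintype m] [DecidableEq m]

theorem MinDec.coef {B : Subalgebra ℂ (Matrix m m ℂ)} {ι : Type*} [Fintype ι]
    {f : ι → Matrix m m ℂ} (hf : MinDec B f) (p : ι → ℝ)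
    (h : (∑ j, (p j : ℂ) • f j).PosSemidef) : ∀ j, 0 ≤ p j := by
  intro j
  have h1 := trace_mul_psd_nonneg (proj_isHerm_pos (hf.herm j) (hf.idem j)) h
  rw [hf.mul_sum (fun j => (p j : ℂ)), Matrix.trace_smul, smul_eq_mul, (hf.trace_pos j).2, ← Complex.ofReal_mul] at h1
  have h2 : 0 ≤ p j * (f j).trace.re := by exact_mod_cast h1
  exact nonneg_of_mul_nonneg_left h2 (hf.trace_pos j).1

theorem MinDec.coef_le {B : Subalgebra ℂ (Matrix m m ℂ)} {ι : Type*} [Fintype ι]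
    {f : ι → Matrix m m ℂ} (hf : MinDec B f) (p : ι → ℝ)
    (h : IsDensity (∑ j, (p j : ℂ) • f j)) : ∀ j, p j ≤ (f j).trace.re⁻¹ := by
  intro j
  have h0 := hf.coef p h.1
  have h1 := h.2
  rw [Matrix.trace_sum] at h1
  have h2 : ∑ j, p j * (f j).trace.re = 1 := by
    have : (((∑ j, p j * (f j).trace.re : ℝ)) : ℂ) = 1 := by
      rw [← h1]
      push_cast
      refine Finset.sum_congr rfl fun j _ => ?_
      rw [Matrix.trace_smul, smul_eq_mul, ← (hf.trace_pos j).2]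
    exact_mod_cast this
  have h3 : p j * (f j).trace.re ≤ 1 := by
    rw [← h2]
    exact Finset.single_le_sum (f := fun j => p j * (f j).trace.re)
      (fun i _ => mul_nonneg (h0 i) (hf.trace_pos i).1.le) (Finset.mem_univ j)
  rwa [← one_div, le_div_iff₀ (hf.trace_pos j).1]

theorem tau_dom (B : Subalgebra ℂ (Matrix m m ℂ)) (hB : ∀ a ∈ B, a.conjTranspose ∈ B)
    {ι : Type*} [Fintype ι] {e : ι → Matrix m m ℂ} (he : MinDec B e)
    {σ : Matrix m m ℂ} (hσ : IsDensity σ) (hσB : σ ∈ B) : (tauOf e - σ).PosSemidef := by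
  obtain ⟨κ, _, f, p, hf, rfl⟩ := exists_minDec B hB hσ.1.1 hσB
  rw [tauOf_eq B he hf, tauOf, ← Finset.sum_sub_distrib]
  have := hf.toPDec.psd (fun j => (f j).trace.re⁻¹ - p j) fun j => sub_nonneg.2 (hf.coef_le p hσ j)
  convert this using 2 with j
  push_cast
  rw [sub_smul]

theorem tau_psd {B : Subalgebra ℂ (Matrix m m ℂ)} {ι : Type*} [Fintype ι] {e : ι → Matrix m m ℂ}
    (he : MinDec B e) : (tauOf e).PosSemidef :=
  he.toPDec.psd _ fun j => inv_nonneg.2 (he.trace_pos j).1.le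

theorem tau_mem {B : Subalgebra ℂ (Matrix m m ℂ)} {ι : Type*} [Fintype ι] {e : ι → Matrix m m ℂ}
    (he : MinDec B e) : tauOf e ∈ B :=
  sum_mem fun j _ => B.smul_mem (he.mem j) _

theorem test_x (B B' : Subalgebra ℂ (Matrix m m ℂ)) (hB' : ∀ a ∈ B', a.conjTranspose ∈ B')
    (hBB : B ≤ B') {ι : Type*} [Fintype ι] {e : ι → Matrix m m ℂ} (he : MinDec B e)
    {c : ℝ} (hc : 0 < c) (K : ℕ)
    (hK : ∀ (κ : Type) (_ : Fintype κ) (f : κ → Matrix m m ℂ), MinDec B' f → Fintype.card κ ≤ K) :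
    ∃ T : Matrix m m ℂ, T.PosSemidef ∧ (1 - T).PosSemidef ∧
      (T * tauOf e).trace.re ≤ 1 / c ∧
      ∀ A ∈ B', IsDensity A → ∀ t ∈ Set.Ioo (0 : ℝ) 1,
        ((1 - T) * A).trace.re ≤ (c * K) ^ t * (mpow (tauOf e) t * mpow A (1 - t)).trace.re := by
  classical
  obtain ⟨κ, _, f, α, hf, hτ⟩ := exists_minDec B' hB' (tau_psd he).1 (hBB (tau_mem he))
  have hα : ∀ k, 0 ≤ α k := hf.coef α (hτ ▸ tau_psd he)
  let k0 : ℝ := c * Fintype.card κ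
  let χ : κ → ℝ := fun k => if k0 * α k ≤ (f k).trace.re⁻¹ then 1 else 0
  have hχ0 : ∀ k, 0 ≤ χ k := fun k => by simp only [χ]; split_ifs <;> norm_num
  have hχ1 : ∀ k, 0 ≤ 1 - χ k := fun k => by simp only [χ]; split_ifs <;> norm_num
  have h1T : (1 : Matrix m m ℂ) - ∑ k, (χ k : ℂ) • f k = ∑ k, ((1 - χ k : ℝ) : ℂ) • f k := by
    conv_lhs => rw [← hf.sum]
    rw [← Finset.sum_sub_distrib]
    refine Finset.sum_congr rfl fun k _ => ?_
    push_cast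
    rw [sub_smul, one_smul]
  refine ⟨∑ k, (χ k : ℂ) • f k, hf.toPDec.psd χ hχ0, ?_, ?_, ?_⟩
  · rw [h1T]
    exact hf.toPDec.psd _ hχ1
  · rw [hτ]
    have : (∑ k, (χ k : ℂ) • f k) * (∑ j, (α j : ℂ) • f j) = ∑ k, ((χ k * α k : ℝ) : ℂ) • f k := by
      rw [Finset.sum_mul]
      refine Finset.sum_congr rfl fun k _ => ?_
      rw [Matrix.smul_mul, hf.mul_sum (fun j => (α j : ℂ)), smul_smul]
      push_cast
      rfl
    rw [this, Matrix.trace_sum, Complex.re_sum]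
    calc _ ≤ ∑ k : κ, 1 / k0 := by
          refine Finset.sum_le_sum fun k _ => ?_
          have hcard : 0 < Fintype.card κ := Fintype.card_pos_iff.2 ⟨k⟩
          have hk0 : 0 < k0 := mul_pos hc (by exact_mod_cast hcard)
          rw [Matrix.trace_smul, smul_eq_mul, Complex.re_ofReal_mul]
          simp only [χ]
          split_ifs with h
          · rw [one_mul, le_div_iff₀ hk0]
            have hv := (hf.trace_pos k).1
            have := mul_le_mul_of_nonneg_right h hv.le
            rw [inv_mul_cancel₀ hv.ne'] at this
            linarith
          · rw [zero_mul, zero_mul]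
            positivity
      _ ≤ 1 / c := by
          rw [Finset.sum_const, Finset.card_univ, nsmul_eq_mul]
          rcases Nat.eq_zero_or_pos (Fintype.card κ) with h | h
          · rw [h]; simp; exact hc.le
          · have : (0 : ℝ) < Fintype.card κ := by exact_mod_cast h
            simp only [k0]
            apply le_of_eq
            field_simp
  · rintro A hA hAd t ⟨ht0, ht1⟩
    obtain ⟨ι', _, g, p, hg, rfl⟩ := exists_minDec B' hB' hAd.1.1 hA
    have hp0 := hg.coef p hAd.1
    have hp1 := hg.coef_le p hAd
    rw [h1T, hτ, mpow_dec hf.toPDec, mpow_dec hg.toPDec, Finset.sum_mul_sum, Finset.sum_mul_sum]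
    simp only [Matrix.trace_sum, Complex.re_sum, Finset.mul_sum]
    refine Finset.sum_le_sum fun k _ => Finset.sum_le_sum fun j _ => ?_
    simp only [Matrix.smul_mul, Matrix.mul_smul, Matrix.trace_smul, smul_eq_mul, Complex.re_ofReal_mul]
    have hpos : 0 ≤ (f k * g j).trace.re := by
      have := trace_mul_psd_nonneg (proj_isHerm_pos (hf.herm k) (hf.idem k)) (proj_isHerm_pos (hg.herm j) (hg.idem j))
      exact (Complex.le_def.1 this).1
    by_cases hz : f k * g j = 0
    · rw [hz]; simp
    have hvv := trace_eq_of_mul_ne B' hg hf j k hz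
    rw [← mul_assoc, ← mul_assoc, ← mul_assoc]
    refine mul_le_mul_of_nonneg_right ?_ hpos
    rw [mul_comm (p j), mul_right_comm]
    have hcK : (0 : ℝ) ≤ c * K := mul_nonneg hc.le (Nat.cast_nonneg _)
    have hrhs : 0 ≤ (c * K) ^ t * pw t (α k) * pw (1 - t) (p j) :=
      mul_nonneg (mul_nonneg (Real.rpow_nonneg hcK _) (pw_nonneg _ _)) (pw_nonneg _ _)
    by_cases hch : k0 * α k ≤ (f k).trace.re⁻¹
    · have : χ k = 1 := if_pos hch
      rw [this]
      simpa using hrhs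
    · have hχ : χ k = 0 := if_neg hch
      rw [hχ, sub_zero, one_mul, pw_eq ht0 (hα k), pw_eq (by linarith) (hp0 j)]
      push Not at hch
      have h1 : p j = p j ^ t * p j ^ (1 - t) := by
        rw [← Real.rpow_add_of_nonneg (hp0 j) ht0.le (by linarith)]; simp
      conv_lhs => rw [h1]
      refine mul_le_mul_of_nonneg_right ?_ (Real.rpow_nonneg (hp0 j) _)
      rw [← Real.mul_rpow hcK (hα k)]
      refine Real.rpow_le_rpow (hp0 j) ?_ ht0.le
      have h2 : k0 * α k ≤ c * K * α k := by
        refine mul_le_mul_of_nonneg_right ?_ (hα k)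
        refine mul_le_mul_of_nonneg_left ?_ hc.le
        exact_mod_cast hK κ _ f hf
      have h3 := hp1 j
      rw [← hvv] at h3
      linarith

theorem cqState_mul {X : Type*} [Fintype X] [DecidableEq X] (w w' : X → ℝ) (A C : X → Matrix m m ℂ) :
    cqState w A * cqState w' C = cqState (fun x => w x * w' x) (fun x => A x * C x) := by
  ext ⟨x, i⟩ ⟨y, j⟩
  simp only [cqState, Matrix.mul_apply, Matrix.of_apply, Fintype.sum_prod_type]
  rw [Finset.sum_eq_single x]
  · by_cases h : x = y
    · subst h
      simp only [if_true, Finset.mul_sum]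
      refine Finset.sum_congr rfl fun k _ => ?_
      push_cast
      ring
    · simp [h]
  · intro b _ hb
    simp [hb.symm]
  · simp

theorem cqState_trace {X : Type*} [Fintype X] [DecidableEq X] (w : X → ℝ) (A : X → Matrix m m ℂ) :
    (cqState w A).trace = ∑ x, (w x : ℂ) * (A x).trace := by
  simp [cqState, Matrix.trace, Matrix.diag, Fintype.sum_prod_type, Finset.mul_sum]

theorem cqState_psd {X : Type*} [Fintype X] [DecidableEq X] {A : X → Matrix m m ℂ}
    (hA : ∀ x, (A x).PosSemidef) : (cqState (fun _ => 1) A).PosSemidef := by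
  choose D hD using fun x => psd_factor (hA x)
  have h1 : (cqState (fun _ => 1) D).conjTranspose = cqState (fun _ => 1) (fun x => (D x).conjTranspose) := by
    ext ⟨x, i⟩ ⟨y, j⟩
    simp only [cqState, Matrix.conjTranspose_apply, Matrix.of_apply]
    by_cases h : x = y
    · subst h; simp
    · simp [h, Ne.symm h]
  have : cqState (fun _ => 1) A = (cqState (fun _ => 1) D).conjTranspose * cqState (fun _ => 1) D := by
    rw [h1, cqState_mul]
    simp only [mul_one]
    congr 1
    ext1 x
    exact hD x
  rw [this]
  exact Matrix.posSemidef_conjTranspose_mul_self _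

theorem cqState_one_sub {X : Type*} [Fintype X] [DecidableEq X] (A : X → Matrix m m ℂ) :
    1 - cqState (fun _ => 1) A = cqState (fun _ => 1) (fun x => 1 - A x) := by
  ext ⟨x, i⟩ ⟨y, j⟩
  simp only [cqState, Matrix.sub_apply, Matrix.of_apply, Matrix.one_apply, Prod.mk.injEq]
  by_cases h : x = y
  · subst h; simp
  · simp [h]

variable {n d : ℕ} {𝒳 : Type*}

/-- Permutation average of a family of matrices. -/
def tbar (T : (Fin n → 𝒳) → Matrix (Fin n → Fin d) (Fin n → Fin d) ℂ) (x : Fin n → 𝒳) :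
    Matrix (Fin n → Fin d) (Fin n → Fin d) ℂ :=
  (((n.factorial : ℝ)⁻¹ : ℝ) : ℂ) • ∑ π : Equiv.Perm (Fin n), (T (x ∘ π)).submatrix (fun i => i ∘ π) (fun i => i ∘ π)

theorem tbar_psd {T : (Fin n → 𝒳) → Matrix (Fin n → Fin d) (Fin n → Fin d) ℂ}
    (hT : ∀ x, (T x).PosSemidef) (x : Fin n → 𝒳) : (tbar T x).PosSemidef := by
  refine Matrix.PosSemidef.smul ?_ ?_
  · exact Matrix.posSemidef_sum _ fun π _ => (hT _).submatrix _
  · have : (0 : ℝ) ≤ (n.factorial : ℝ)⁻¹ := by positivity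
    exact_mod_cast this

theorem comp_inj (π : Equiv.Perm (Fin n)) {D : Type*} : Function.Injective (fun i : Fin n → D => i ∘ π) := by
  intro a b h
  ext1 k
  have := congrFun h (π.symm k)
  simpa using this

theorem tbar_one_sub (T : (Fin n → 𝒳) → Matrix (Fin n → Fin d) (Fin n → Fin d) ℂ) (x : Fin n → 𝒳) :
    1 - tbar T x = tbar (fun x => 1 - T x) x := by
  unfold tbar
  simp only [Matrix.submatrix_sub, Pi.sub_apply]
  have h1 : ∀ π : Equiv.Perm (Fin n), (1 : Matrix (Fin n → Fin d) (Fin n → Fin d) ℂ).submatrix (fun i => i ∘ π) (fun i => i ∘ π) = 1 :=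
    fun π => Matrix.submatrix_one _ (comp_inj π)
  simp only [h1]
  rw [Finset.sum_sub_distrib, Finset.sum_const, Finset.card_univ, Fintype.card_perm, Fintype.card_fin, smul_sub]
  congr 1
  rw [← Nat.cast_smul_eq_nsmul ℂ, smul_smul]
  have : (n.factorial : ℂ) ≠ 0 := by exact_mod_cast n.factorial_ne_zero
  push_cast
  rw [inv_mul_cancel₀ this, one_smul]

theorem trace_sub_mul (π : Equiv.Perm (Fin n)) (T A : Matrix (Fin n → Fin d) (Fin n → Fin d) ℂ) :
    (T.submatrix (fun i => i ∘ π) (fun i => i ∘ π) * A).trace =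
      (T * A.submatrix (fun i => i ∘ π.symm) (fun i => i ∘ π.symm)).trace := by
  let E : (Fin n → Fin d) ≃ (Fin n → Fin d) := Equiv.arrowCongr π.symm (Equiv.refl _)
  have hE : ∀ i, E i = i ∘ π := fun i => by ext k; simp [E, Equiv.arrowCongr]
  simp only [Matrix.trace, Matrix.diag, Matrix.mul_apply, Matrix.submatrix_apply]
  rw [← Equiv.sum_comp E fun i => ∑ j, T i j * A (j ∘ π.symm) (i ∘ π.symm)]
  refine Finset.sum_congr rfl fun i _ => ?_
  rw [← Equiv.sum_comp E fun j => T (E i) j * A (j ∘ π.symm) (E i ∘ π.symm)]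
  refine Finset.sum_congr rfl fun j _ => ?_
  have h2 : ∀ i : Fin n → Fin d, (i ∘ π) ∘ π.symm = i := fun i => by ext k; simp
  rw [hE, hE, h2, h2]

theorem tbar_trace (T : (Fin n → 𝒳) → Matrix (Fin n → Fin d) (Fin n → Fin d) ℂ) (x : Fin n → 𝒳)
    (A : Matrix (Fin n → Fin d) (Fin n → Fin d) ℂ) :
    (tbar T x * A).trace.re = (n.factorial : ℝ)⁻¹ * ∑ π : Equiv.Perm (Fin n),
      (T (x ∘ π) * A.submatrix (fun i => i ∘ π.symm) (fun i => i ∘ π.symm)).trace.re := by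
  unfold tbar
  rw [Matrix.smul_mul, Matrix.trace_smul, smul_eq_mul, Complex.re_ofReal_mul, Finset.sum_mul, Matrix.trace_sum,
    Complex.re_sum]
  simp only [trace_sub_mul]

theorem cq_tbar [Fintype 𝒳] [DecidableEq 𝒳] (T : (Fin n → 𝒳) → Matrix (Fin n → Fin d) (Fin n → Fin d) ℂ)
    (P : 𝒳 → ℝ) (A : (Fin n → 𝒳) → Matrix (Fin n → Fin d) (Fin n → Fin d) ℂ) :
    (cqState (fun _ => 1) (tbar T) * cqState (fun x : Fin n → 𝒳 => ∏ k, P (x k)) A).trace.re =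
      (n.factorial : ℝ)⁻¹ * ∑ π : Equiv.Perm (Fin n), ∑ x : Fin n → 𝒳, (∏ k, P (x k)) *
        (T x * (A (x ∘ π.symm)).submatrix (fun i => i ∘ π.symm) (fun i => i ∘ π.symm)).trace.re := by
  rw [cqState_mul, cqState_trace, Complex.re_sum]
  simp only [one_mul, Complex.re_ofReal_mul, tbar_trace]
  rw [Finset.mul_sum]
  simp only [Finset.mul_sum]
  rw [Finset.sum_comm]
  refine Finset.sum_congr rfl fun π _ => ?_
  let E : (Fin n → 𝒳) ≃ (Fin n → 𝒳) := Equiv.arrowCongr π.symm (Equiv.refl _)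
  have hE : ∀ i, E i = i ∘ π := fun i => by ext k; simp [E, Equiv.arrowCongr]
  rw [← Equiv.sum_comp E (fun x => (n.factorial : ℝ)⁻¹ * _)]
  refine Finset.sum_congr rfl fun x _ => ?_
  have h2 : (x ∘ π) ∘ π.symm = x := by ext k; simp
  rw [hE, h2]
  have h3 : ∏ k, P ((x ∘ π) k) = ∏ k, P (x k) := Equiv.prod_comp π fun k => P (x k)
  rw [h3]
  ring

end Part7

section Part8
open Matrix

theorem sum_prodP {n : ℕ} {𝒳 : Type*} [Fintype 𝒳] {P : 𝒳 → ℝ} (hP1 : ∑ x, P x = 1) :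
    ∑ x : Fin n → 𝒳, ∏ k, P (x k) = 1 := by
  classical
  have := Finset.prod_univ_sum (fun _ : Fin n => (Finset.univ : Finset 𝒳)) (fun _ x => P x)
  rw [Fintype.piFinset_univ] at this
  rw [← this, hP1]
  simp

theorem smul_real_eq {m : Type*} (r : ℝ) (A : Matrix m m ℂ) : r • A = (r : ℂ) • A := by
  ext i j
  simp

theorem twirl_density {n d : ℕ} {σ : Matrix (Fin n → Fin d) (Fin n → Fin d) ℂ} (hσ : IsDensity σ) :
    IsDensity ((((n.factorial : ℝ)⁻¹ : ℝ) : ℂ) • ∑ π : Equiv.Perm (Fin n),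
      σ.submatrix (fun i => i ∘ π) (fun i => i ∘ π)) := by
  constructor
  · exact tbar_psd (𝒳 := Unit) (T := fun _ => σ) (fun _ => hσ.1) (fun _ => ())
  · have h1 : ∀ π : Equiv.Perm (Fin n), (σ.submatrix (fun i => i ∘ π) (fun i => i ∘ π)).trace = 1 := fun π => by
      have := trace_sub_mul π σ 1
      rw [Matrix.submatrix_one _ (comp_inj π.symm), mul_one, mul_one] at this
      rw [this, hσ.2]
    rw [Matrix.trace_smul, Matrix.trace_sum]
    simp only [h1]
    rw [Finset.sum_const, Finset.card_univ, Fintype.card_perm, Fintype.card_fin, nsmul_eq_mul, mul_one, smul_eq_mul]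
    have : (n.factorial : ℂ) ≠ 0 := by exact_mod_cast n.factorial_ne_zero
    push_cast
    rw [inv_mul_cancel₀ this]

theorem part_two {n d : ℕ} {𝒳 : Type*} [Fintype 𝒳] [DecidableEq 𝒳]
    {ι : Type*} [Fintype ι] {e : ι → Matrix (Fin n → Fin d) (Fin n → Fin d) ℂ}
    (he : MinDec (Bx d (fun _ : Fin n => ())) e)
    {T : (Fin n → 𝒳) → Matrix (Fin n → Fin d) (Fin n → Fin d) ℂ} {b : ℝ}
    (hT : ∀ x, (T x).PosSemidef) (hb : ∀ x, (T x * tauOf e).trace.re ≤ b)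
    {P : 𝒳 → ℝ} (hP : ∀ x, 0 ≤ P x) (hP1 : ∑ x, P x = 1)
    {σ : Matrix (Fin n → Fin d) (Fin n → Fin d) ℂ} (hσ : IsDensity σ) :
    (cqState (fun _ => 1) (tbar T) * cqState (fun x : Fin n → 𝒳 => ∏ k, P (x k)) (fun _ => σ)).trace.re ≤ b := by
  rw [cq_tbar]
  set σb := (((n.factorial : ℝ)⁻¹ : ℝ) : ℂ) • ∑ π : Equiv.Perm (Fin n),
      σ.submatrix (fun i => i ∘ π) (fun i => i ∘ π) with hσb
  have hd : IsDensity σb := twirl_density hσ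
  have hmem : σb ∈ Bx d (fun _ : Fin n => ()) := Subalgebra.smul_mem _ (twirl_mem σ) _
  have hdom := tau_dom _ (Bx_conj _) he hd hmem
  have h1 : (n.factorial : ℝ)⁻¹ * ∑ π : Equiv.Perm (Fin n), ∑ x : Fin n → 𝒳, (∏ k, P (x k)) *
        (T x * σ.submatrix (fun i => i ∘ π.symm) (fun i => i ∘ π.symm)).trace.re =
      ∑ x : Fin n → 𝒳, (∏ k, P (x k)) * (T x * σb).trace.re := by
    have hinv : ∑ π : Equiv.Perm (Fin n), ∑ x : Fin n → 𝒳, (∏ k, P (x k)) *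
        (T x * σ.submatrix (fun i => i ∘ π.symm) (fun i => i ∘ π.symm)).trace.re =
        ∑ π : Equiv.Perm (Fin n), ∑ x : Fin n → 𝒳, (∏ k, P (x k)) *
        (T x * σ.submatrix (fun i => i ∘ π) (fun i => i ∘ π)).trace.re :=
      Equiv.sum_comp (Equiv.inv (Equiv.Perm (Fin n))) (fun π => ∑ x : Fin n → 𝒳, (∏ k, P (x k)) *
        (T x * σ.submatrix (fun i => i ∘ π) (fun i => i ∘ π)).trace.re)
    rw [hinv, Finset.sum_comm, Finset.mul_sum]
    refine Finset.sum_congr rfl fun x _ => ?_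
    rw [hσb, Matrix.mul_smul, Matrix.trace_smul, smul_eq_mul, Complex.re_ofReal_mul, Matrix.mul_sum, Matrix.trace_sum,
      Complex.re_sum, ← Finset.mul_sum]
    ring
  rw [h1]
  calc _ ≤ ∑ x : Fin n → 𝒳, (∏ k, P (x k)) * b := by
        refine Finset.sum_le_sum fun x _ => ?_
        refine mul_le_mul_of_nonneg_left ?_ (Finset.prod_nonneg fun k _ => hP _)
        refine le_trans ?_ (hb x)
        have := (Complex.le_def.1 (trace_mul_psd_nonneg (hT x) hdom)).1
        rw [Matrix.mul_sub, Matrix.trace_sub, Complex.sub_re] at this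
        simpa using this
    _ = b := by rw [← Finset.sum_mul, sum_prodP hP1, one_mul]

theorem Z_pow_le {n : ℕ} (hn : 1 ≤ n) {Z t : ℝ} (hZ : 0 ≤ Z) (ht : t ∈ Set.Ioo (0 : ℝ) 1) :
    (Z ^ n) ^ (1 - t) ≤ (2 : ℝ) ^ (-((n : ℝ) * t * (-((1 - t) / t) * Real.logb 2 Z))) := by
  obtain ⟨ht0, ht1⟩ := ht
  rcases hZ.eq_or_lt with h | h
  · rw [← h, zero_pow (by omega), Real.zero_rpow (by linarith)]
    positivity
  · apply le_of_eq
    have : -((n : ℝ) * t * (-((1 - t) / t) * Real.logb 2 Z)) = Real.logb 2 Z * (n * (1 - t)) := by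
      field_simp
    rw [this, Real.rpow_mul (by norm_num), Real.rpow_logb (by norm_num) (by norm_num) h, Real.rpow_mul hZ,
      Real.rpow_natCast]

theorem part_one_iid {n d : ℕ} (hn : 1 ≤ n) {𝒳 : Type*} [Fintype 𝒳] [DecidableEq 𝒳]
    {ι : Type*} [Fintype ι] {e : ι → Matrix (Fin n → Fin d) (Fin n → Fin d) ℂ}
    (he : MinDec (Bx d (fun _ : Fin n => ())) e)
    {T : (Fin n → 𝒳) → Matrix (Fin n → Fin d) (Fin n → Fin d) ℂ} {c : (Fin n → 𝒳) → ℝ} {C : ℝ}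
    {t : ℝ} (ht : t ∈ Set.Ioo (0 : ℝ) 1)
    (hT : ∀ x, ∀ A ∈ Bx d x, IsDensity A →
        ((1 - T x) * A).trace.re ≤ (c x) ^ t * (mpow (tauOf e) t * mpow A (1 - t)).trace.re)
    (hC0 : 0 ≤ C) (hc0 : ∀ x, 0 ≤ c x) (hc : ∀ x, c x ≤ C)
    {P : 𝒳 → ℝ} (hP : ∀ x, 0 ≤ P x)
    {r : 𝒳 → Matrix (Fin d) (Fin d) ℂ} (hr : ∀ x, IsDensity (r x)) :
    ∑ x : Fin n → 𝒳, (∏ k, P (x k)) * ((1 - T x) * tensorFam (fun k => r (x k))).trace.re ≤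
      C ^ t * ((Fintype.card ι : ℝ) ^ t * (2 : ℝ) ^ (-((n : ℝ) * t * renyiI P r t))) := by
  have hG := psd_mix hP fun x => mpow_psd (hr x).1.1 (1 - t)
  set G := ∑ x, P x • mpow (r x) (1 - t) with hGdef
  have hten : tensorFam (fun _ : Fin n => G) = ∑ x : Fin n → 𝒳, ((∏ k, P (x k) : ℝ) : ℂ) •
      tensorFam (fun k => mpow (r (x k)) (1 - t)) := by
    have := tensorFam_sum (fun (_ : Fin n) (x : 𝒳) => (P x : ℂ)) (fun _ x => mpow (r x) (1 - t))
    simp only [← smul_real_eq] at this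
    rw [hGdef, this]
    refine Finset.sum_congr rfl fun x _ => ?_
    push_cast
    rfl
  have hden : ∀ x : Fin n → 𝒳, IsDensity (tensorFam (fun k => r (x k))) := fun x =>
    ⟨tensorFam_posSemidef fun k => (hr _).1, by rw [tensorFam_trace]; simp [(hr _).2]⟩
  have hτ := (tau_psd he).1
  calc _ ≤ ∑ x : Fin n → 𝒳, (∏ k, P (x k)) * (C ^ t *
        (mpow (tauOf e) t * tensorFam (fun k => mpow (r (x k)) (1 - t))).trace.re) := by
        refine Finset.sum_le_sum fun x _ => ?_
        refine mul_le_mul_of_nonneg_left ?_ (Finset.prod_nonneg fun k _ => hP _)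
        refine (hT x _ (tensor_mem_Bx x r) (hden x)).trans ?_
        rw [mpow_tensor fun k => (hr _).1]
        refine mul_le_mul_of_nonneg_right ?_ ?_
        · exact Real.rpow_le_rpow (hc0 x) (hc x) ht.1.le
        · exact (Complex.le_def.1 (trace_mul_psd_nonneg (mpow_psd hτ t)
            (tensorFam_posSemidef fun k => mpow_psd (hr (x k)).1.1 (1 - t)))).1
    _ = C ^ t * (mpow (tauOf e) t * tensorFam (fun _ : Fin n => G)).trace.re := by
        rw [hten, Finset.mul_sum, Matrix.trace_sum, Complex.re_sum, Finset.mul_sum]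
        refine Finset.sum_congr rfl fun x _ => ?_
        rw [Matrix.mul_smul, Matrix.trace_smul, smul_eq_mul, Complex.re_ofReal_mul]
        ring
    _ ≤ _ := by
        have hC : 0 ≤ C ^ t := Real.rpow_nonneg hC0 _
        refine mul_le_mul_of_nonneg_left ?_ hC
        refine (holder_trace he.toPDec (fun i => (he.trace_pos i).1)
          (tensorFam_posSemidef fun _ : Fin n => hG) ht).trans ?_
        refine mul_le_mul_of_nonneg_left ?_ (Real.rpow_nonneg (Nat.cast_nonneg _) _)
        rw [mpow_tensor fun _ => hG, tensorFam_trace, Finset.prod_const, Finset.card_univ, Fintype.card_fin]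
        have hZ0 : 0 ≤ (mpow G (1 / (1 - t))).trace.re := (Complex.le_def.1 (mpow_psd hG.1 _).trace_nonneg).1
        have hZ : (mpow G (1 / (1 - t))).trace = (((mpow G (1 / (1 - t))).trace.re : ℝ) : ℂ) := by
          rw [mpow_trace hG.1, Complex.ofReal_re]
        rw [hZ, ← Complex.ofReal_pow, Complex.ofReal_re]
        exact Z_pow_le hn hZ0 ht

theorem part_one_avg {n d : ℕ} (hn : 1 ≤ n) {𝒳 𝒮 : Type*} [Fintype 𝒳] [DecidableEq 𝒳] [Fintype 𝒮] [DecidableEq 𝒮]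
    [Nonempty 𝒮] (ρ : 𝒳 → 𝒮 → Matrix (Fin d) (Fin d) ℂ) (hρ : ∀ x s, IsDensity (ρ x s))
    {T : (Fin n → 𝒳) → Matrix (Fin n → Fin d) (Fin n → Fin d) ℂ} (hT : ∀ x, (1 - T x).PosSemidef)
    {P : 𝒳 → ℝ} (hP : ∀ x, 0 ≤ P x) (s : Fin n → 𝒮) :
    ((1 - cqState (fun _ => 1) (tbar T)) * cqState (fun x : Fin n → 𝒳 => ∏ k, P (x k))
      (fun x => tensorFam fun k => ρ (x k) (s k))).trace.re ≤
    ((n : ℝ) + 1) ^ (Fintype.card 𝒮 - 1) *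
      ∑ x : Fin n → 𝒳, (∏ k, P (x k)) * ((1 - T x) *
        tensorFam (fun k => ∑ a, ((occ s a : ℝ) / n) • ρ (x k) a)).trace.re := by
  rw [cqState_one_sub]
  simp only [tbar_one_sub]
  change (cqState (fun _ => 1) (tbar (fun x => 1 - T x)) * _).trace.re ≤ _
  rw [cq_tbar]
  let F : (Fin n → 𝒮) → ℝ := fun s' => ∑ x : Fin n → 𝒳, (∏ k, P (x k)) *
    ((1 - T x) * tensorFam (fun k => ρ (x k) (s' k))).trace.re
  have hF : ∀ s', 0 ≤ F s' := fun s' => Finset.sum_nonneg fun x _ =>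
    mul_nonneg (Finset.prod_nonneg fun k _ => hP _) (Complex.le_def.1 (trace_mul_psd_nonneg (hT x)
      (tensorFam_posSemidef fun k => (hρ _ _).1))).1
  have h1 : ∑ π : Equiv.Perm (Fin n), ∑ x : Fin n → 𝒳, (∏ k, P (x k)) *
        ((1 - T x) * (tensorFam fun k => ρ ((x ∘ π.symm) k) (s k)).submatrix (fun i => i ∘ π.symm)
          (fun i => i ∘ π.symm)).trace.re = ∑ π : Equiv.Perm (Fin n), F (s ∘ π) := by
    refine Finset.sum_congr rfl fun π _ => Finset.sum_congr rfl fun x _ => ?_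
    rw [tensorFam_submatrix]
    simp
  rw [h1]
  have h2 := type_avg hn s F hF
  have hfac : (0 : ℝ) < n.factorial := by exact_mod_cast n.factorial_pos
  have h3 : ∑ s' : Fin n → 𝒮, (∏ k, ((occ s (s' k) : ℝ) / n)) * F s' =
      ∑ x : Fin n → 𝒳, (∏ k, P (x k)) * ((1 - T x) *
        tensorFam (fun k => ∑ a, ((occ s a : ℝ) / n) • ρ (x k) a)).trace.re := by
    simp only [F, Finset.mul_sum]
    rw [Finset.sum_comm]
    refine Finset.sum_congr rfl fun x _ => ?_
    have := tensorFam_sum (fun (_ : Fin n) (a : 𝒮) => (((occ s a : ℝ) / n : ℝ) : ℂ)) (fun k a => ρ (x k) a)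
    simp only [← smul_real_eq] at this
    rw [this, Finset.mul_sum, Matrix.trace_sum, Complex.re_sum, Finset.mul_sum]
    refine Finset.sum_congr rfl fun s' _ => ?_
    rw [← Complex.ofReal_prod, Matrix.mul_smul, Matrix.trace_smul, smul_eq_mul, Complex.re_ofReal_mul]
    ring
  rw [h3] at h2
  rw [inv_mul_le_iff₀ hfac, ← mul_assoc]
  exact h2

end Part8

section Part9
open Matrix

theorem half_cast (d : ℕ) (hd : 1 ≤ d) : ((d * (d - 1) / 2 : ℕ) : ℝ) = (d : ℝ) * ((d : ℝ) - 1) / 2 := by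
  have h2 : 2 ∣ d * (d - 1) := (Nat.even_mul_pred_self d).two_dvd
  rw [Nat.cast_div h2 (by norm_num), Nat.cast_mul, Nat.cast_sub hd]
  simp

theorem expo_eq (n d X S : ℕ) (hd : 1 ≤ d) (hS : 1 ≤ S) (t : ℝ) :
    ((n : ℝ) + 1) ^ (((S : ℝ) - 1) + t * X * ((d : ℝ) - 1) * (d : ℝ) / 2 + ((d : ℝ) - 1) * X * t) =
      ((n : ℝ) + 1) ^ (S - 1) * (((n : ℝ) + 1) ^ (X * (d - 1 + d * (d - 1) / 2))) ^ t := by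
  have h0 : (0 : ℝ) < (n : ℝ) + 1 := by positivity
  rw [← Real.rpow_natCast, ← Real.rpow_natCast, ← Real.rpow_mul h0.le, ← Real.rpow_add h0]
  congr 1
  push_cast [half_cast d hd, Nat.cast_sub hd, Nat.cast_sub hS]
  ring

theorem main_big {𝒳 𝒮 : Type*} [Fintype 𝒳] [DecidableEq 𝒳] [Fintype 𝒮] [Nonempty 𝒮]
    {d : ℕ} (hX : 2 ≤ Fintype.card 𝒳) (hd : 1 ≤ d)
    (ρ : 𝒳 → 𝒮 → Matrix (Fin d) (Fin d) ℂ)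
    (hρ : ∀ x s, IsDensity (ρ x s))
    (n : ℕ) (hn : 1 ≤ n) (Rhat : ℝ) :
    ∃ T : Matrix ((Fin n → 𝒳) × (Fin n → Fin d)) ((Fin n → 𝒳) × (Fin n → Fin d)) ℂ,
      T.PosSemidef ∧ (1 - T).PosSemidef ∧
      ∀ P : 𝒳 → ℝ, (∀ x, 0 ≤ P x) → (∑ x, P x = 1) →
      ∀ t : ℝ, t ∈ Set.Ioo (0 : ℝ) 1 →
        (∀ sv : Fin n → 𝒮,
          (Matrix.trace ((1 - T) *
            cqState (fun xv : Fin n → 𝒳 => ∏ k, P (xv k))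
              (fun xv => tensorFam fun k => ρ (xv k) (sv k)))).re ≤
            ((n : ℝ) + 1) ^
                (((Fintype.card 𝒮 : ℝ) - 1)
                  + t * (Fintype.card 𝒳) * ((d : ℝ) - 1) * (d : ℝ) / 2
                  + ((d : ℝ) - 1) * (Fintype.card 𝒳) * t) *
              (2 : ℝ) ^ ((n : ℝ) * t *
                (Rhat - ⨅ Q : ProbVec 𝒮,
                  renyiI P (fun x => ∑ s, Q.1 s • ρ x s) t))) ∧
        (∀ σ : Matrix (Fin n → Fin d) (Fin n → Fin d) ℂ, IsDensity σ →
          (Matrix.trace (T *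
            cqState (fun xv : Fin n → 𝒳 => ∏ k, P (xv k)) (fun _ => σ))).re ≤
            (n : ℝ) ^ ((d : ℝ) * ((d : ℝ) - 1) / 2) * (numPartLe n d : ℝ) *
              (2 : ℝ) ^ (-(n : ℝ) * Rhat)) := by
  classical
  obtain ⟨ι, _, e, -, he, -⟩ := exists_minDec (Bx d (fun _ : Fin n => ())) (Bx_conj _)
    (Matrix.isHermitian_one) (Subalgebra.one_mem _)
  set L := Fintype.card (LowP d) with hL
  have hL1 : 1 ≤ L := by rw [hL, card_lowP]; omega
  set N0 := Nat.multichoose L n with hN0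
  have hN : Fintype.card ι ≤ N0 := by
    refine (card_minDec _ he).trans (le_of_eq ?_)
    simp [occ, hN0, hL]
  have hN0pos : 0 < N0 := by
    rw [hN0, Nat.multichoose_eq]
    exact Nat.choose_pos (by omega)
  set b := d * (d - 1) / 2 with hb
  set D : ℝ := (n : ℝ) ^ b * (numPartLe n d : ℝ) with hD
  have hn0 : (0 : ℝ) < n := by exact_mod_cast hn
  have hΛ : (0 : ℝ) < numPartLe n d := by exact_mod_cast numPart_pos n d hd
  have hDpos : 0 < D := by positivity
  set w : ℝ := (2 : ℝ) ^ ((n : ℝ) * Rhat) with hw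
  have hwpos : 0 < w := by positivity
  have hcpos : 0 < w / D := by positivity
  let K : (Fin n → 𝒳) → ℕ := fun x => ∏ a, Nat.multichoose L (occ x a)
  set V : ℝ := ((n : ℝ) + 1) ^ (Fintype.card 𝒳 * (d - 1 + b)) with hV
  have hVpos : 0 < V := by positivity
  have hK : ∀ x, w / D * K x ≤ w * V / N0 := fun x => by
    have h1 : N0 * K x ≤ n ^ b * numPartLe n d * (n + 1) ^ (Fintype.card 𝒳 * (d - 1 + b)) :=
      scalar_ineq hX hn hd x
    have h2 : (N0 : ℝ) * K x ≤ D * V := by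
      rw [hD, hV]
      exact_mod_cast h1
    have hN0r : (0 : ℝ) < N0 := by exact_mod_cast hN0pos
    rw [le_div_iff₀ hN0r]
    calc w / D * K x * N0 = w / D * (N0 * K x) := by ring
      _ ≤ w / D * (D * V) := by gcongr
      _ = w * V := by field_simp
  choose T hT0 hT1 hT2 hT3 using fun x : Fin n → 𝒳 => test_x (Bx d (fun _ : Fin n => ())) (Bx d x) (Bx_conj x)
    (Bx_const_le x) he hcpos (K x) (fun κ _ f hf => card_minDec x hf)
  refine ⟨cqState (fun _ => 1) (tbar T), cqState_psd (tbar_psd hT0), ?_, ?_⟩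
  · rw [cqState_one_sub]
    refine cqState_psd fun x => ?_
    rw [tbar_one_sub]
    exact tbar_psd hT1 x
  intro P hP hP1 t ht
  constructor
  · intro s
    refine (part_one_avg hn ρ hρ hT1 hP s).trans ?_
    rw [expo_eq n d _ _ hd Fintype.card_pos, mul_assoc]
    refine mul_le_mul_of_nonneg_left ?_ (by positivity)
    have hQ0 : ∀ a, (0 : ℝ) ≤ (occ s a : ℝ) / n := fun a => by positivity
    have hQ1 : ∑ a, (occ s a : ℝ) / n = 1 := by
      rw [← Finset.sum_div, ← Nat.cast_sum, sum_occ, div_self hn0.ne']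
    let Q : ProbVec 𝒮 := ⟨fun a => (occ s a : ℝ) / n, hQ0, hQ1⟩
    have hr : ∀ x, IsDensity (∑ a, ((occ s a : ℝ) / n) • ρ x a) := fun x => mix_density hQ0 hQ1 (hρ x)
    refine (part_one_iid hn he ht (fun x A hA hAd => hT3 x A hA hAd t ht) (C := w * V / N0) (by positivity)
      (fun x => by positivity) hK hP hr).trans ?_
    have hinf := ciInf_le (bdd_renyi ρ hρ P hP hP1 t ht) Q
    set I0 := ⨅ Q : ProbVec 𝒮, renyiI P (fun x => ∑ s, Q.1 s • ρ x s) t with hI0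
    change I0 ≤ renyiI P (fun x => ∑ a, ((occ s a : ℝ) / n) • ρ x a) t at hinf
    set I1 := renyiI P (fun x => ∑ a, ((occ s a : ℝ) / n) • ρ x a) t with hI1
    have hN0r : (0 : ℝ) < N0 := by exact_mod_cast hN0pos
    have h1 : (w * V / N0) ^ t * (Fintype.card ι : ℝ) ^ t ≤ (w * V) ^ t := by
      rw [← Real.mul_rpow (by positivity) (by positivity)]
      refine Real.rpow_le_rpow (by positivity) ?_ ht.1.le
      rw [div_mul_eq_mul_div, div_le_iff₀ hN0r]
      refine mul_le_mul_of_nonneg_left ?_ (by positivity)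
      exact_mod_cast hN
    rw [← mul_assoc]
    calc _ ≤ (w * V) ^ t * (2 : ℝ) ^ (-((n : ℝ) * t * I1)) := mul_le_mul_of_nonneg_right h1 (by positivity)
      _ = V ^ t * (2 : ℝ) ^ ((n : ℝ) * t * (Rhat - I1)) := by
          rw [Real.mul_rpow hwpos.le hVpos.le, hw, ← Real.rpow_mul (by norm_num), mul_right_comm,
            ← Real.rpow_add (by norm_num), mul_comm]
          congr 2
          ring
      _ ≤ _ := by
          refine mul_le_mul_of_nonneg_left ?_ (by positivity)
          refine Real.rpow_le_rpow_of_exponent_le (by norm_num) ?_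
          refine mul_le_mul_of_nonneg_left (by linarith) ?_
          exact mul_nonneg hn0.le ht.1.le
  · intro σ hσ
    refine (part_two he hT0 hT2 hP hP1 hσ).trans (le_of_eq ?_)
    rw [← half_cast d hd, Real.rpow_natCast, one_div_div, neg_mul, Real.rpow_neg (by norm_num)]
    rfl

theorem trace_mpow_mpow {m : Type*} [Fintype m] [DecidableEq m] {A : Matrix m m ℂ} (hA : IsDensity A) {t : ℝ}
    (ht : t ∈ Set.Ioo (0 : ℝ) 1) : mpow (mpow A (1 - t)) (1 / (1 - t)) = A := by
  have ht2 : 0 < 1 - t := by linarith [ht.2]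
  rw [mpow_spec hA.1.1, mpow_dec (specProj_pdec hA.1.1)]
  conv_rhs => rw [spec_eq hA.1.1]
  refine Finset.sum_congr rfl fun i _ => ?_
  have h0 := hA.1.eigenvalues_nonneg i
  rw [pw_eq ht2 h0, pw_eq (one_div_pos.2 ht2) (Real.rpow_nonneg h0 _), ← Real.rpow_mul h0, mul_one_div_cancel ht2.ne',
    Real.rpow_one]

end Part9

/-- For finite `𝒮`, every `n ≥ 1` and `R̂ > 0` there is a universal test
`T_n` with `0 ⪯ T_n ⪯ I` satisfying, for every probability distribution `P` on `𝒳` and every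
`t ∈ (0,1)`, the two operational bounds (i) and (ii). -/
theorem statement1 {𝒳 𝒮 : Type*} [Fintype 𝒳] [DecidableEq 𝒳] [Fintype 𝒮] [Nonempty 𝒮]
    {d : ℕ}
    (ρ : 𝒳 → 𝒮 → Matrix (Fin d) (Fin d) ℂ)
    (hρ : ∀ x s, IsDensity (ρ x s))
    (n : ℕ) (hn : 1 ≤ n) (Rhat : ℝ) (hR : 0 < Rhat) :
    ∃ T : Matrix ((Fin n → 𝒳) × (Fin n → Fin d)) ((Fin n → 𝒳) × (Fin n → Fin d)) ℂ,
      T.PosSemidef ∧ (1 - T).PosSemidef ∧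
      ∀ P : 𝒳 → ℝ, (∀ x, 0 ≤ P x) → (∑ x, P x = 1) →
      ∀ t : ℝ, t ∈ Set.Ioo (0 : ℝ) 1 →
        (∀ sv : Fin n → 𝒮,
          (Matrix.trace ((1 - T) *
            cqState (fun xv : Fin n → 𝒳 => ∏ k, P (xv k))
              (fun xv => tensorFam fun k => ρ (xv k) (sv k)))).re ≤
            ((n : ℝ) + 1) ^
                (((Fintype.card 𝒮 : ℝ) - 1)
                  + t * (Fintype.card 𝒳) * ((d : ℝ) - 1) * (d : ℝ) / 2
                  + ((d : ℝ) - 1) * (Fintype.card 𝒳) * t) *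
              (2 : ℝ) ^ ((n : ℝ) * t *
                (Rhat - ⨅ Q : ProbVec 𝒮,
                  renyiI P (fun x => ∑ s, Q.1 s • ρ x s) t))) ∧
        (∀ σ : Matrix (Fin n → Fin d) (Fin n → Fin d) ℂ, IsDensity σ →
          (Matrix.trace (T *
            cqState (fun xv : Fin n → 𝒳 => ∏ k, P (xv k)) (fun _ => σ))).re ≤
            (n : ℝ) ^ ((d : ℝ) * ((d : ℝ) - 1) / 2) * (numPartLe n d : ℝ) *
              (2 : ℝ) ^ (-(n : ℝ) * Rhat)) := by
  rcases Nat.eq_zero_or_pos (Fintype.card 𝒳) with h0 | h0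
  · have : IsEmpty 𝒳 := Fintype.card_eq_zero_iff.1 h0
    refine ⟨0, Matrix.PosSemidef.zero, by rw [sub_zero]; exact Matrix.PosSemidef.one, ?_⟩
    intro P _ hP1
    simp at hP1
  obtain ⟨x0⟩ := Fintype.card_pos_iff.1 h0
  have hd : 1 ≤ d := by
    by_contra hd
    have hd0 : d = 0 := by omega
    subst hd0
    have := (hρ x0 (Classical.arbitrary 𝒮)).2
    simp [Matrix.trace] at this
  rcases Nat.lt_or_ge (Fintype.card 𝒳) 2 with h2 | h2
  swap
  · exact main_big h2 hd ρ hρ n hn Rhat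
  have h1 : Fintype.card 𝒳 = 1 := by omega
  have hsub : Subsingleton 𝒳 := Fintype.card_le_one_iff_subsingleton.1 h1.le
  have huni : (Finset.univ : Finset 𝒳) = {x0} := by
    ext y
    simp [Subsingleton.elim y x0]
  refine ⟨0, Matrix.PosSemidef.zero, by rw [sub_zero]; exact Matrix.PosSemidef.one, ?_⟩
  intro P hP hP1 t ht
  have hPx : P x0 = 1 := by rw [huni] at hP1; simpa using hP1
  constructor
  · intro s
    have hI : ∀ Q : ProbVec 𝒮, renyiI P (fun x => ∑ s, Q.1 s • ρ x s) t = 0 := by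
      intro Q
      have hq := mix_density Q.2.1 Q.2.2 (hρ x0)
      unfold renyiI
      rw [huni, Finset.sum_singleton, hPx, one_smul, trace_mpow_mpow hq ht, hq.2]
      simp
    simp only [hI]
    rw [Real.iInf_const_zero, sub_zero, sub_zero, one_mul, cqState_trace]
    have hL : ∀ x : Fin n → 𝒳, (tensorFam fun k => ρ (x k) (s k)).trace = 1 := fun x => by
      rw [tensorFam_trace]
      simp [(hρ _ _).2]
    simp only [hL, mul_one]
    rw [← Complex.ofReal_sum, sum_prodP hP1, Complex.ofReal_re]
    have hS : (1 : ℝ) ≤ Fintype.card 𝒮 := by exact_mod_cast (Fintype.card_pos : 0 < Fintype.card 𝒮)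
    have hd1 : (0 : ℝ) ≤ (d : ℝ) - 1 := by
      have : (1 : ℝ) ≤ d := by exact_mod_cast hd
      linarith
    have ht0 := ht.1.le
    refine one_le_mul_of_one_le_of_one_le ?_ ?_
    · refine Real.one_le_rpow (by have : (0 : ℝ) ≤ n := Nat.cast_nonneg n
                                  linarith) ?_
      have e1 : 0 ≤ t * (Fintype.card 𝒳 : ℝ) * ((d : ℝ) - 1) * (d : ℝ) / 2 := by positivity
      have e2 : 0 ≤ ((d : ℝ) - 1) * (Fintype.card 𝒳 : ℝ) * t := by positivity
      linarith
    · exact Real.one_le_rpow (by norm_num) (by positivity)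
  · intro σ _
    rw [zero_mul, Matrix.trace_zero, Complex.zero_re]
    positivity
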